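/- Let K ⊆ ℝ² be a compact convex set with nonempty interior, with area A, boundary length L, circumradius R and inradius r. Then the Bonnesen-type inequality L² − 4πA ≥ L²·((R − r)/(R + r))² holds. -/

import Mathlib

open Set MeasureTheory

noncomputable section

/-- The inradius of a set `K ⊆ ℝ²`: the supremum of radii `ρ ≥ 0` of closed balls
contained in `K`. -/
def inradius (K : Set (EuclideanSpace ℝ (Fin 2))) : ℝ :=
  sSup { ρ : ℝ | 0 ≤ ρ ∧ ∃ c : EuclideanSpace ℝ (Fin 2), Metric.closedBall c ρ ⊆ K }

/-- The circumradius of a set `K ⊆ ℝ²`: the infimum of radii `ρ ≥ 0` of closed balls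
containing `K`. -/
def circumradius (K : Set (EuclideanSpace ℝ (Fin 2))) : ℝ :=
  sInf { ρ : ℝ | 0 ≤ ρ ∧ ∃ c : EuclideanSpace ℝ (Fin 2), K ⊆ Metric.closedBall c ρ }


def pr (θ : ℝ) (x : EuclideanSpace ℝ (Fin 2)) : ℝ := x 0 * Real.cos θ + x 1 * Real.sin θ

lemma pr_add (θ : ℝ) (x y : EuclideanSpace ℝ (Fin 2)) : pr θ (x + y) = pr θ x + pr θ y := by
  simp [pr]; ring

lemma pr_sub (θ : ℝ) (x y : EuclideanSpace ℝ (Fin 2)) : pr θ (x - y) = pr θ x - pr θ y := by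
  simp [pr]; ring

lemma pr_smul (θ a : ℝ) (x : EuclideanSpace ℝ (Fin 2)) : pr θ (a • x) = a * pr θ x := by
  simp [pr]; ring

lemma pr_neg (θ : ℝ) (x : EuclideanSpace ℝ (Fin 2)) : pr θ (-x) = - pr θ x := by
  simp [pr]; ring

lemma pr_continuous (θ : ℝ) : Continuous (pr θ) := by
  unfold pr; fun_prop

lemma pr_add_pi (θ : ℝ) (x : EuclideanSpace ℝ (Fin 2)) : pr (θ + Real.pi) x = - pr θ x := by
  simp [pr]; ring

lemma norm_sq_two (x : EuclideanSpace ℝ (Fin 2)) : ‖x‖ ^ 2 = x 0 ^ 2 + x 1 ^ 2 := by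
  rw [EuclideanSpace.real_norm_sq_eq]; simp [Fin.sum_univ_two]

/-- polar form -/
lemma exists_polar (x : EuclideanSpace ℝ (Fin 2)) :
    ∃ φ : ℝ, ∀ θ : ℝ, pr θ x = ‖x‖ * Real.cos (θ - φ) := by
  have hn : ‖(⟨x 0, x 1⟩ : ℂ)‖ = ‖x‖ := by
    have h1 : ‖(⟨x 0, x 1⟩ : ℂ)‖ ^ 2 = ‖x‖ ^ 2 := by
      rw [norm_sq_two, ← Complex.normSq_eq_norm_sq, Complex.normSq_mk]; ring
    exact (pow_left_inj₀ (norm_nonneg _) (norm_nonneg _) (by norm_num)).1 h1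
  refine ⟨Complex.arg ⟨x 0, x 1⟩, fun θ => ?_⟩
  have h1 := Complex.norm_mul_cos_arg (⟨x 0, x 1⟩ : ℂ)
  have h2 := Complex.norm_mul_sin_arg (⟨x 0, x 1⟩ : ℂ)
  rw [hn] at h1 h2
  simp only at h1 h2
  rw [pr, Real.cos_sub]
  linear_combination (-Real.cos θ) * h1 - Real.sin θ * h2

lemma abs_pr_le (θ : ℝ) (x : EuclideanSpace ℝ (Fin 2)) : |pr θ x| ≤ ‖x‖ := by
  obtain ⟨φ, h⟩ := exists_polar x
  rw [h, abs_mul, abs_of_nonneg (norm_nonneg x)]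
  exact mul_le_of_le_one_right (norm_nonneg _) (Real.abs_cos_le_one _)

lemma pr_le (θ : ℝ) (x : EuclideanSpace ℝ (Fin 2)) : pr θ x ≤ ‖x‖ :=
  (le_abs_self _).trans (abs_pr_le θ x)

lemma exists_pr_eq_norm (x : EuclideanSpace ℝ (Fin 2)) : ∃ φ : ℝ, pr φ x = ‖x‖ := by
  obtain ⟨φ, h⟩ := exists_polar x
  exact ⟨φ, by rw [h]; simp⟩

def uvec (θ : ℝ) : EuclideanSpace ℝ (Fin 2) := !₂[Real.cos θ, Real.sin θ]

lemma pr_uvec (θ φ : ℝ) : pr θ (uvec φ) = Real.cos (θ - φ) := by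
  simp [pr, uvec, Real.cos_sub]; ring

lemma norm_uvec (θ : ℝ) : ‖uvec θ‖ = 1 := by
  have := norm_sq_two (uvec θ)
  have h2 : ‖uvec θ‖ ^ 2 = 1 := by rw [this]; simp [uvec]
  exact (pow_eq_one_iff_of_nonneg (norm_nonneg _) (by norm_num)).1 h2

/-- Lipschitz dependence on the angle -/
lemma abs_pr_sub_le (θ φ : ℝ) (x : EuclideanSpace ℝ (Fin 2)) :
    |pr θ x - pr φ x| ≤ ‖x‖ * |θ - φ| := by
  obtain ⟨ψ, h⟩ := exists_polar x
  rw [h, h, ← mul_sub, abs_mul, abs_of_nonneg (norm_nonneg x)]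
  refine mul_le_mul_of_nonneg_left ?_ (norm_nonneg _)
  have := Real.lipschitzWith_cos.dist_le_mul (θ - ψ) (φ - ψ)
  simpa [Real.dist_eq] using this


lemma integral_abs_cos : ∫ x in (0:ℝ)..(2 * Real.pi), |Real.cos x| = 4 := by
  have hp : Function.Periodic (fun x => |Real.cos x|) (2 * Real.pi) := fun x => by simp
  have h0 := hp.intervalIntegral_add_eq 0 (-(Real.pi / 2))
  rw [zero_add] at h0
  rw [h0]
  have hc : Continuous (fun x => |Real.cos x|) := by fun_prop
  rw [← intervalIntegral.integral_add_adjacent_intervals (b := Real.pi / 2)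
    (hc.intervalIntegrable _ _) (hc.intervalIntegrable _ _)]
  have h1 : ∫ x in (-(Real.pi / 2))..(Real.pi / 2), |Real.cos x| = 2 := by
    rw [intervalIntegral.integral_congr (g := Real.cos)]
    · rw [integral_cos]; simp; norm_num
    · intro x hx
      rw [uIcc_of_le (by linarith [Real.pi_pos])] at hx
      exact abs_of_nonneg (Real.cos_nonneg_of_mem_Icc hx)
  have h2 : ∫ x in (Real.pi / 2)..(-(Real.pi / 2) + 2 * Real.pi), |Real.cos x| = 2 := by
    have := intervalIntegral.integral_comp_add_right (a := -(Real.pi / 2)) (b := Real.pi / 2)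
      (fun x => |Real.cos x|) Real.pi
    simp only [Real.cos_add_pi, abs_neg] at this
    rw [h1] at this
    refine Eq.trans ?_ this.symm
    congr 1 <;> ring
  rw [h1, h2]; norm_num

lemma sum_abs_cos_le (N : ℕ) (δ φ : ℝ) (hδ : 0 ≤ δ) (hN : N * δ = 2 * Real.pi)
    : Real.sin (δ / 2) * ∑ k ∈ Finset.range N, |Real.cos (k * δ - φ)| ≤ 2 := by
  have hc : Continuous (fun x => |Real.cos x|) := by fun_prop
  have hp : Function.Periodic (fun x => |Real.cos x|) (2 * Real.pi) := fun x => by simp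
  have h1 : ∀ x : ℝ, 2 * Real.sin (δ / 2) * |Real.cos x| ≤
      ∫ y in (x - δ / 2)..(x + δ / 2), |Real.cos y| := by
    intro x
    have h2 := intervalIntegral.abs_integral_le_integral_abs (f := Real.cos) (μ := volume)
      (a := x - δ / 2) (b := x + δ / 2) (by linarith)
    rw [integral_cos, Real.sin_add, Real.sin_sub] at h2
    have h3 : |Real.sin x * Real.cos (δ / 2) + Real.cos x * Real.sin (δ / 2) -
      (Real.sin x * Real.cos (δ / 2) - Real.cos x * Real.sin (δ / 2))| =
      2 * |Real.sin (δ / 2)| * |Real.cos x| := by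
      rw [← abs_two, ← abs_mul, ← abs_mul, abs_two]; congr 1; ring
    rw [h3] at h2
    refine le_trans ?_ h2
    gcongr
    exact le_abs_self _
  have h4 := intervalIntegral.sum_integral_adjacent_intervals (n := N) (μ := volume)
    (f := fun x => |Real.cos x|) (a := fun k : ℕ => k * δ - φ - δ / 2)
    (fun k _ => hc.intervalIntegrable _ _)
  have h5 : ∑ k ∈ Finset.range N, 2 * Real.sin (δ / 2) * |Real.cos (k * δ - φ)| ≤ 4 := by
    calc _ ≤ ∑ k ∈ Finset.range N, ∫ y in ((k : ℕ) * δ - φ - δ / 2)..(((k + 1 : ℕ) : ℝ) * δ - φ - δ / 2), |Real.cos y| := by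
          refine Finset.sum_le_sum fun k _ => ?_
          refine (h1 _).trans (le_of_eq ?_)
          congr 1; push_cast; ring
      _ = 4 := by
          rw [h4]
          have := hp.intervalIntegral_add_eq (((0:ℕ):ℝ) * δ - φ - δ / 2) 0
          rw [zero_add, integral_abs_cos] at this
          rw [← this]; congr 1
          rw [hN]; simp; ring
  rw [← Finset.mul_sum] at h5
  linarith

lemma sum_abs_pr_le (N : ℕ) (δ : ℝ) (hδ : 0 ≤ δ) (hN : N * δ = 2 * Real.pi)
    (v : EuclideanSpace ℝ (Fin 2)) :
    Real.sin (δ / 2) * ∑ k ∈ Finset.range N, |pr (k * δ) v| ≤ 2 * ‖v‖ := by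
  obtain ⟨φ, h⟩ := exists_polar v
  have := mul_le_mul_of_nonneg_left (sum_abs_cos_le N δ φ hδ hN) (norm_nonneg v)
  simp only [h, abs_mul, abs_norm, ← Finset.mul_sum]
  linarith

lemma two_mul_sub_le_sum (y : ℕ → ℝ) (n : ℕ) (hy : y 0 = y n) (a b : ℕ) (ha : a ≤ n)
    (hb : b ≤ n) : 2 * (y a - y b) ≤ ∑ i ∈ Finset.range n, |y (i + 1) - y i| := by
  have key : ∀ p q, p ≤ q → |y q - y p| ≤ ∑ i ∈ Finset.Ico p q, |y (i + 1) - y i| := by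
    intro p q hpq
    have := dist_le_Ico_sum_dist y hpq
    simp only [Real.dist_eq] at this
    rw [abs_sub_comm]
    refine this.trans (le_of_eq ?_)
    exact Finset.sum_congr rfl fun i _ => abs_sub_comm _ _
  have main : ∀ a b, a ≤ b → b ≤ n → 2 * |y b - y a| ≤ ∑ i ∈ Finset.range n, |y (i + 1) - y i| := by
    intro a b hab hb
    have h1 := key 0 a (Nat.zero_le _)
    have h2 := key a b hab
    have h3 := key b n hb
    rw [Finset.range_eq_Ico, ← Finset.sum_Ico_consecutive _ (Nat.zero_le a) (hab.trans hb),
      ← Finset.sum_Ico_consecutive _ hab hb]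
    have h4 : |y b - y a| ≤ |y a - y 0| + |y n - y b| := by
      rw [hy]
      have := abs_add_le (y a - y n) (y n - y b)
      rw [abs_sub_comm (y b)]
      simpa using this
    linarith
  rcases le_total a b with h | h
  · have := main a b h hb
    rw [abs_sub_comm] at this
    linarith [le_abs_self (y a - y b)]
  · have := main b a h ha
    linarith [le_abs_self (y a - y b)]

lemma sum_width_le (γ : ℝ → EuclideanSpace ℝ (Fin 2)) (hγclosed : γ 0 = γ 1)
    (hfin : eVariationOn γ (Set.Icc 0 1) ≠ ⊤)
    (N : ℕ) (δ : ℝ) (hδ : 0 ≤ δ) (hδ2 : δ ≤ Real.pi) (hN : N * δ = 2 * Real.pi)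
    (τ τ' : ℕ → ℝ) (hτ : ∀ k, τ k ∈ Set.Icc (0:ℝ) 1) (hτ' : ∀ k, τ' k ∈ Set.Icc (0:ℝ) 1) :
    Real.sin (δ / 2) * ∑ k ∈ Finset.range N, (pr (k * δ) (γ (τ k)) - pr (k * δ) (γ (τ' k))) ≤
      (eVariationOn γ (Set.Icc 0 1)).toReal := by
  classical
  have hs : 0 ≤ Real.sin (δ / 2) := Real.sin_nonneg_of_nonneg_of_le_pi (by linarith) (by linarith)
  set S : Finset ℝ := {0, 1} ∪ ((Finset.range N).image τ ∪ (Finset.range N).image τ') with hS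
  have hS01 : ∀ x ∈ S, x ∈ Set.Icc (0:ℝ) 1 := by
    intro x hx
    simp only [hS, Finset.mem_union, Finset.mem_insert, Finset.mem_singleton,
      Finset.mem_image] at hx
    rcases hx with (rfl | rfl) | ⟨k, -, rfl⟩ | ⟨k, -, rfl⟩
    · simp
    · simp
    · exact hτ k
    · exact hτ' k
  have h0S : (0:ℝ) ∈ S := by simp [hS]
  have h1S : (1:ℝ) ∈ S := by simp [hS]
  obtain ⟨n, hn⟩ : ∃ n, S.card = n + 1 :=
    Nat.exists_eq_succ_of_ne_zero (Finset.card_ne_zero_of_mem h0S)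
  let e := S.orderEmbOfFin hn
  let x : ℕ → ℝ := fun i => e ⟨min i n, by omega⟩
  have hxmono : Monotone x := by
    intro i j hij
    apply e.monotone
    simp only [Fin.mk_le_mk]
    omega
  have hxS : ∀ i, x i ∈ S := fun i => S.orderEmbOfFin_mem hn _
  have hsurj : ∀ t ∈ S, ∃ i ≤ n, x i = t := by
    intro t ht
    have : t ∈ Set.range e := by rw [Finset.range_orderEmbOfFin]; exact ht
    obtain ⟨i, hi⟩ := this
    refine ⟨i, by omega, ?_⟩
    rw [← hi]
    simp only [x]
    congr 1
    ext
    simp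
    omega
  have hx0 : x 0 = 0 := by
    obtain ⟨i, -, hi⟩ := hsurj 0 h0S
    exact le_antisymm (hi ▸ hxmono (Nat.zero_le i)) (hS01 _ (hxS 0)).1
  have hx1 : x n = 1 := by
    obtain ⟨i, hi', hi⟩ := hsurj 1 h1S
    exact le_antisymm (hS01 _ (hxS n)).2 (hi ▸ hxmono hi')
  have hvar : ∑ i ∈ Finset.range n, ‖γ (x (i + 1)) - γ (x i)‖ ≤
      (eVariationOn γ (Set.Icc 0 1)).toReal := by
    have := eVariationOn.sum_le (f := γ) (s := Set.Icc 0 1) (n := n) (u := x) hxmono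
      (fun i => hS01 _ (hxS i))
    have h2 := ENNReal.toReal_mono hfin this
    rw [ENNReal.toReal_sum (fun i _ => edist_ne_top _ _)] at h2
    simpa [edist_dist, dist_eq_norm, ENNReal.toReal_ofReal] using h2
  have hk : ∀ k ∈ Finset.range N, 2 * (pr (k * δ) (γ (τ k)) - pr (k * δ) (γ (τ' k))) ≤
      ∑ i ∈ Finset.range n, |pr (k * δ) (γ (x (i + 1)) - γ (x i))| := by
    intro k hkN
    obtain ⟨a, ha, hxa⟩ := hsurj (τ k) (by
      simp only [hS, Finset.mem_union]; right; left; exact Finset.mem_image_of_mem _ hkN)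
    obtain ⟨b, hb, hxb⟩ := hsurj (τ' k) (by
      simp only [hS, Finset.mem_union]; right; right; exact Finset.mem_image_of_mem _ hkN)
    have := two_mul_sub_le_sum (fun i => pr (k * δ) (γ (x i))) n (by
      simp only [hx0, hx1, hγclosed]) a b ha hb
    simp only [hxa, hxb, ← pr_sub] at this
    simpa [pr_sub] using this
  have h1 := Finset.sum_le_sum hk
  rw [← Finset.mul_sum, Finset.sum_comm] at h1
  have h2 : Real.sin (δ / 2) * ∑ i ∈ Finset.range n, ∑ k ∈ Finset.range N,
      |pr (k * δ) (γ (x (i + 1)) - γ (x i))| ≤ 2 * ∑ i ∈ Finset.range n, ‖γ (x (i + 1)) - γ (x i)‖ := by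
    rw [Finset.mul_sum, Finset.mul_sum]
    exact Finset.sum_le_sum fun i _ => sum_abs_pr_le N δ hδ hN _
  have h3 := mul_le_mul_of_nonneg_left h1 hs
  linarith


/-- a line through an interior point meets the frontier in at most two points -/
lemma frontier_line (K : Set (EuclideanSpace ℝ (Fin 2))) (hconv : Convex ℝ K) (hcl : IsClosed K)
    (z v : EuclideanSpace ℝ (Fin 2)) (hz : z ∈ interior K) (a b : ℝ)
    (ha : z + a • v ∈ frontier K) (hb : z + b • v ∈ frontier K) (hab : 0 < a * b) : a = b := by
  have key : ∀ a b : ℝ, z + a • v ∈ frontier K → z + b • v ∈ frontier K → 0 < a * b →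
      ¬ (|a| < |b|) := by
    intro a b ha hb hab hlt
    have hb0 : b ≠ 0 := by rintro rfl; simp at hab
    have hbK : z + b • v ∈ closure K := frontier_subset_closure hb
    have hab1 : 0 < a / b := by rw [div_pos_iff]; exact (mul_pos_iff.1 hab)
    have hab2 : a / b < 1 := by
      have : |a / b| < 1 := by rw [abs_div, div_lt_one (abs_pos.2 hb0)]; exact hlt
      exact (abs_lt.1 this).2
    have h1 := hconv.combo_interior_closure_mem_interior hz hbK (a := 1 - a / b) (b := a / b)
      (by linarith) hab1.le (by ring)
    have h2 : (1 - a / b) • z + (a / b) • (z + b • v) = z + a • v := by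
      rw [smul_add, smul_smul, div_mul_cancel₀ _ hb0, sub_smul, one_smul]; abel
    rw [h2] at h1
    exact ha.2 h1
  have h1 := key a b ha hb hab
  have h2 := key b a hb ha (by linarith)
  have h3 : |a| = |b| := le_antisymm (not_lt.1 h2) (not_lt.1 h1)
  rcases abs_eq_abs.1 h3 with h | h
  · exact h
  · subst h; nlinarith [sq_nonneg b]

lemma eq_smul_of_pr_zero (θ : ℝ) (x : EuclideanSpace ℝ (Fin 2)) (h : pr θ x = 0) :
    ∃ a : ℝ, x = a • uvec (θ + Real.pi / 2) := by
  refine ⟨- x 0 * Real.sin θ + x 1 * Real.cos θ, ?_⟩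
  have hs := Real.sin_sq_add_cos_sq θ
  unfold pr at h
  ext i
  fin_cases i
  · simp [uvec, Real.cos_add_pi_div_two]
    linear_combination (-x 0) * hs + Real.cos θ * h
  · simp [uvec, Real.sin_add_pi_div_two]
    linear_combination (-x 1) * hs + Real.sin θ * h

lemma three_points (K : Set (EuclideanSpace ℝ (Fin 2))) (hconv : Convex ℝ K) (hcl : IsClosed K)
    (hint : (interior K).Nonempty) (θ c : ℝ) (p q : EuclideanSpace ℝ (Fin 2)) (hp : p ∈ K)
    (hq : q ∈ K) (hpc : pr θ p < c) (hqc : c < pr θ q)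
    (x : Fin 3 → EuclideanSpace ℝ (Fin 2)) (hx : ∀ i, x i ∈ frontier K)
    (hxc : ∀ i, pr θ (x i) = c) (hinj : Function.Injective x) : False := by
  obtain ⟨o, ho⟩ := hint
  -- interior point on the line
  have seg : ∀ q ∈ K, (pr θ o - c) * (pr θ q - c) < 0 → ∃ z ∈ interior K, pr θ z = c := by
    intro q hq hlt
    have hne : pr θ q - pr θ o ≠ 0 := by
      intro h
      have : pr θ q = pr θ o := by linarith
      rw [this] at hlt
      nlinarith [mul_self_nonneg (pr θ o - c)]
    set s := (c - pr θ o) / (pr θ q - pr θ o) with hs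
    have hs' : s * (pr θ q - pr θ o) = c - pr θ o := div_mul_cancel₀ _ hne
    have hs1 : 0 ≤ s := by
      rw [hs, div_nonneg_iff]
      rcases lt_or_ge (pr θ o) c with h | h
      · left; constructor <;> nlinarith
      · right; constructor <;> nlinarith
    have hs2 : s < 1 := by
      rcases lt_or_gt_of_ne hne with h | h
      · by_contra hcon
        push Not at hcon
        have h5 : c ≤ pr θ q := by nlinarith
        nlinarith [mul_nonneg (sub_nonneg.2 h5) (show 0 ≤ pr θ o - c by linarith)]
      · by_contra hcon
        push Not at hcon
        have h5 : pr θ q ≤ c := by nlinarith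
        nlinarith [mul_nonneg (sub_nonneg.2 h5) (show 0 ≤ c - pr θ o by linarith)]
    refine ⟨(1 - s) • o + s • q, hconv.combo_interior_closure_mem_interior ho (subset_closure hq)
      (by linarith) hs1 (by ring), ?_⟩
    rw [pr_add, pr_smul, pr_smul]; linarith
  obtain ⟨z, hz, hzc⟩ : ∃ z ∈ interior K, pr θ z = c := by
    rcases lt_trichotomy (pr θ o) c with h | h | h
    · exact seg q hq (mul_neg_of_neg_of_pos (by linarith) (by linarith))
    · exact ⟨o, ho, h⟩
    · exact seg p hp (mul_neg_of_pos_of_neg (by linarith) (by linarith))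
  have h1 : ∀ i, ∃ a : ℝ, x i - z = a • uvec (θ + Real.pi / 2) := fun i =>
    eq_smul_of_pr_zero θ _ (by rw [pr_sub, hxc, hzc, sub_self])
  choose a ha using h1
  have hxa : ∀ i, x i = z + a i • uvec (θ + Real.pi / 2) := fun i => by rw [← ha]; abel
  have ha0 : ∀ i, a i ≠ 0 := by
    intro i hi
    have := hxa i
    rw [hi, zero_smul, add_zero] at this
    exact (hx i).2 (this ▸ hz)
  have hpair : ∀ i j, i ≠ j → a i * a j < 0 := by
    intro i j hij
    by_contra hcon
    have hpos : 0 < a i * a j := lt_of_le_of_ne (not_lt.1 hcon) (mul_ne_zero (ha0 i) (ha0 j)).symm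
    have := frontier_line K hconv hcl z _ hz (a i) (a j) (hxa i ▸ hx i) (hxa j ▸ hx j) hpos
    exact hij (hinj (by rw [hxa i, hxa j, this]))
  have e1 := hpair 0 1 (by decide)
  have e2 := hpair 0 2 (by decide)
  have e3 := hpair 1 2 (by decide)
  nlinarith [mul_pos_of_neg_of_neg e1 e2, mul_self_nonneg (a 0), mul_pos_of_neg_of_neg e1 e3, sq_nonneg (a 0 * a 1), sq_nonneg (a 1)]

lemma coord_var_le (K : Set (EuclideanSpace ℝ (Fin 2)))
    (hcomp : IsCompact K) (hconv : Convex ℝ K) (hint : (interior K).Nonempty)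
    (γ : ℝ → EuclideanSpace ℝ (Fin 2))
    (hγcont : ContinuousOn γ (Set.Icc 0 1))
    (hγinj : Set.InjOn γ (Set.Ico 0 1))
    (hγimg : γ '' Set.Icc 0 1 = frontier K) (D : ℝ) (hD : ∀ x ∈ K, ‖x‖ ≤ D) (θ : ℝ)
    (x : ℕ → ℝ) (hx : Monotone x) (hx01 : ∀ i, x i ∈ Set.Icc (0:ℝ) 1) (n : ℕ) :
    ∑ i ∈ Finset.range n, ENNReal.ofReal |pr θ (γ (x (i + 1))) - pr θ (γ (x i))| ≤
      ENNReal.ofReal (4 * D) := by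
  classical
  have hcl : IsClosed K := hcomp.isClosed
  set f : ℝ → ℝ := fun t => pr θ (γ t) with hf
  have hfc : ContinuousOn f (Set.Icc 0 1) := (pr_continuous θ).comp_continuousOn hγcont
  have hγK : ∀ t ∈ Set.Icc (0:ℝ) 1, γ t ∈ K := fun t ht =>
    hcl.frontier_subset (hγimg ▸ mem_image_of_mem γ ht)
  let I : ℕ → Set ℝ := fun i => Set.Ioo (min (f (x i)) (f (x (i + 1)))) (max (f (x i)) (f (x (i + 1))))
  have hvol : ∀ i, ENNReal.ofReal |pr θ (γ (x (i + 1))) - pr θ (γ (x i))| = volume (I i) := by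
    intro i
    simp only [I, Real.volume_Ioo, max_sub_min_eq_abs]
    rfl
  -- crossing times
  have hcross : ∀ i c, c ∈ I i → ∃ t ∈ Set.Ioo (x i) (x (i + 1)), f t = c := by
    intro i c hc
    have hle : x i ≤ x (i + 1) := hx (Nat.le_succ i)
    have hsub : Set.Icc (x i) (x (i + 1)) ⊆ Set.Icc 0 1 :=
      Set.Icc_subset_Icc (hx01 _).1 (hx01 _).2
    rcases le_total (f (x i)) (f (x (i + 1))) with h | h
    · simp only [I, min_eq_left h, max_eq_right h] at hc
      exact intermediate_value_Ioo hle (hfc.mono hsub) hc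
    · simp only [I, min_eq_right h, max_eq_left h] at hc
      exact intermediate_value_Ioo' hle (hfc.mono hsub) hc
  have hcount : ∀ c, ((Finset.range n).filter (fun i => c ∈ I i)).card ≤ 2 := by
    intro c
    by_contra hcon
    obtain ⟨i, hi, j, hj, k, hk, hij, hik, hjk⟩ := Finset.two_lt_card.1 (not_le.1 hcon)
    simp only [Finset.mem_filter] at hi hj hk
    choose! t ht htc using fun i (h : c ∈ I i) => hcross i c h
    have htI : ∀ i, c ∈ I i → t i ∈ Set.Ico (0:ℝ) 1 := fun i h =>
      ⟨(hx01 i).1.trans (ht i h).1.le, (ht i h).2.trans_le (hx01 (i + 1)).2⟩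
    have htne : ∀ i j, c ∈ I i → c ∈ I j → i ≠ j → t i ≠ t j := by
      have : ∀ i j, c ∈ I i → c ∈ I j → i < j → t i < t j := fun i j h1 h2 h =>
        ((ht i h1).2.trans_le (hx h)).trans (ht j h2).1
      intro i j h1 h2 h
      rcases lt_or_gt_of_ne h with h | h
      · exact (this i j h1 h2 h).ne
      · exact (this j i h2 h1 h).ne'
    have hends : ∃ p ∈ K, ∃ q ∈ K, pr θ p < c ∧ c < pr θ q := by
      have h1 := hi.2
      simp only [I, Set.mem_Ioo, min_lt_iff, lt_max_iff] at h1
      obtain ⟨h1, h2⟩ := h1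
      rcases h1 with h1 | h1 <;> rcases h2 with h2 | h2
      · exact ⟨_, hγK _ (hx01 _), _, hγK _ (hx01 _), h1, h2⟩
      · exact ⟨_, hγK _ (hx01 _), _, hγK _ (hx01 _), h1, h2⟩
      · exact ⟨_, hγK _ (hx01 _), _, hγK _ (hx01 _), h1, h2⟩
      · exact ⟨_, hγK _ (hx01 _), _, hγK _ (hx01 _), h1, h2⟩
    obtain ⟨p, hp, q, hq, hpc, hqc⟩ := hends
    have hidx : ∀ m : Fin 3, c ∈ I (![i, j, k] m) := by
      intro m; fin_cases m
      · exact hi.2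
      · exact hj.2
      · exact hk.2
    have hidxinj : Function.Injective ![i, j, k] := by
      intro a b hab
      fin_cases a <;> fin_cases b <;> simp_all
    refine three_points K hconv hcl hint θ c p q hp hq hpc hqc (fun m => γ (t (![i, j, k] m)))
      ?_ ?_ ?_
    · intro m
      rw [← hγimg]
      exact mem_image_of_mem _ (Set.Ico_subset_Icc_self (htI _ (hidx m)))
    · intro m
      exact htc _ (hidx m)
    · intro a b hab
      by_contra hne
      have := hγinj (htI _ (hidx a)) (htI _ (hidx b)) hab
      exact htne _ _ (hidx a) (hidx b) (fun h => hne (hidxinj h)) this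
  have hbd : ∀ t ∈ Set.Icc (0:ℝ) 1, |f t| ≤ D := fun t ht =>
    (abs_pr_le θ _).trans (hD _ (hγK t ht))
  have hsub : ∀ i, I i ⊆ Set.Icc (-D) D := by
    intro i c hc
    have h1 := abs_le.1 (hbd _ (hx01 i))
    have h2 := abs_le.1 (hbd _ (hx01 (i + 1)))
    exact ⟨(le_min h1.1 h2.1).trans hc.1.le, hc.2.le.trans (max_le h1.2 h2.2)⟩
  calc ∑ i ∈ Finset.range n, ENNReal.ofReal |pr θ (γ (x (i + 1))) - pr θ (γ (x i))|
      = ∑ i ∈ Finset.range n, ∫⁻ c, (I i).indicator 1 c := by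
        refine Finset.sum_congr rfl fun i _ => ?_
        rw [hvol, lintegral_indicator_one measurableSet_Ioo]
    _ = ∫⁻ c, ∑ i ∈ Finset.range n, (I i).indicator 1 c := by
        rw [lintegral_finsetSum]
        intro i _
        exact measurable_one.indicator measurableSet_Ioo
    _ ≤ ∫⁻ c, (Set.Icc (-D) D).indicator (fun _ => 2) c := by
        refine lintegral_mono fun c => ?_
        by_cases hc : c ∈ Set.Icc (-D) D
        · rw [Set.indicator_of_mem hc]
          have : ∑ i ∈ Finset.range n, (I i).indicator (1 : ℝ → ENNReal) c =
              (((Finset.range n).filter (fun i => c ∈ I i)).card : ENNReal) := by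
            rw [Finset.card_filter]
            push_cast
            refine Finset.sum_congr rfl fun i _ => ?_
            by_cases h : c ∈ I i <;> simp [h]
          rw [this]
          have h2 := (Nat.cast_le (α := ENNReal)).2 (hcount c)
          simpa using h2
        · refine le_of_eq_of_le (Finset.sum_eq_zero fun i _ => ?_) (zero_le)
          exact Set.indicator_of_notMem (fun h => hc (hsub i h)) _
    _ = ENNReal.ofReal (4 * D) := by
        rw [lintegral_indicator measurableSet_Icc, setLIntegral_const, Real.volume_Icc]
        have : (2 : ENNReal) = ENNReal.ofReal 2 := by simp
        rw [this, ← ENNReal.ofReal_mul (by norm_num)]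
        congr 1; ring

lemma variation_ne_top (K : Set (EuclideanSpace ℝ (Fin 2)))
    (hcomp : IsCompact K) (hconv : Convex ℝ K) (hint : (interior K).Nonempty)
    (γ : ℝ → EuclideanSpace ℝ (Fin 2))
    (hγcont : ContinuousOn γ (Set.Icc 0 1))
    (hγinj : Set.InjOn γ (Set.Ico 0 1))
    (hγimg : γ '' Set.Icc 0 1 = frontier K) : eVariationOn γ (Set.Icc 0 1) ≠ ⊤ := by
  obtain ⟨D, hD⟩ := hcomp.isBounded.exists_norm_le
  have : eVariationOn γ (Set.Icc 0 1) ≤ ENNReal.ofReal (4 * D) + ENNReal.ofReal (4 * D) := by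
    unfold eVariationOn
    refine iSup_le fun p => ?_
    obtain ⟨n, x, hx, hx01⟩ := p
    simp only
    have h0 := coord_var_le K hcomp hconv hint γ hγcont hγinj hγimg D hD 0 x hx hx01 n
    have h1 := coord_var_le K hcomp hconv hint γ hγcont hγinj hγimg D hD (Real.pi / 2) x hx hx01 n
    refine le_trans ?_ (add_le_add h0 h1)
    rw [← Finset.sum_add_distrib]
    refine Finset.sum_le_sum fun i _ => ?_
    rw [← ENNReal.ofReal_add (abs_nonneg _) (abs_nonneg _), edist_dist, dist_eq_norm]
    apply ENNReal.ofReal_le_ofReal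
    rw [← pr_sub, ← pr_sub]
    set v := γ (x (i + 1)) - γ (x i)
    have hv := norm_sq_two v
    have e0 : pr 0 v = v 0 := by simp [pr]
    have e1 : pr (Real.pi / 2) v = v 1 := by simp [pr]
    rw [e0, e1]
    refine abs_le_of_sq_le_sq' ?_ (by positivity) |>.2
    rw [hv, ← sq_abs (v 0), ← sq_abs (v 1)]
    nlinarith [mul_nonneg (abs_nonneg (v 0)) (abs_nonneg (v 1))]
  exact ne_top_of_le_ne_top (ENNReal.add_ne_top.2 ⟨ENNReal.ofReal_ne_top, ENNReal.ofReal_ne_top⟩) this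


/-- grid step: the grid has `4 * m` directions -/
def dl (m : ℕ) : ℝ := Real.pi / (2 * m)

lemma dl_pos {m : ℕ} (hm : 0 < m) : 0 < dl m := by
  have : (0:ℝ) < m := by exact_mod_cast hm
  unfold dl; positivity

lemma dl_mul {m : ℕ} (hm : 0 < m) : m * dl m = Real.pi / 2 := by
  have : (0:ℝ) < m := by exact_mod_cast hm
  unfold dl; field_simp

lemma dl_le {m : ℕ} (hm : 0 < m) : dl m ≤ Real.pi / 2 := by
  have h1 : (1:ℝ) ≤ m := by exact_mod_cast hm
  have := dl_mul hm
  nlinarith [dl_pos hm]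

/-- projection to the `k`-th grid direction -/
def gp (m : ℕ) (k : ℤ) (x : EuclideanSpace ℝ (Fin 2)) : ℝ := pr (k * dl m) x

lemma gp_add_half {m : ℕ} (hm : 0 < m) (k : ℤ) (x : EuclideanSpace ℝ (Fin 2)) :
    gp m (k + 2 * m) x = - gp m k x := by
  unfold gp
  rw [← pr_add_pi]
  congr 1
  push_cast
  linarith [dl_mul hm]

lemma gp_periodic {m : ℕ} (hm : 0 < m) (x : EuclideanSpace ℝ (Fin 2)) :
    Function.Periodic (fun k => gp m k x) (4 * m : ℤ) := by
  intro k
  simp only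
  have : k + 4 * (m:ℤ) = (k + 2 * m) + 2 * m := by ring
  rw [this, gp_add_half hm, gp_add_half hm, neg_neg]

lemma per_mod {f : ℤ → ℝ} {N : ℤ} (hf : Function.Periodic f N) (i j : ℤ) :
    f j = f (i + (j - i) % N) := by
  have h := hf.int_mul ((j - i) / N) (i + (j - i) % N)
  rw [← h]
  congr 1
  have := Int.emod_add_mul_ediv (j - i) N
  simp only [Int.cast_id]
  linarith

lemma gp_second_diff (m : ℕ) (k : ℤ) (x : EuclideanSpace ℝ (Fin 2)) :
    gp m (k + 1) x + gp m (k - 1) x = 2 * Real.cos (dl m) * gp m k x := by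
  unfold gp pr
  push_cast
  rw [add_mul, sub_mul, one_mul, Real.cos_add, Real.cos_sub, Real.sin_add, Real.sin_sub]
  ring

/-! discrete Wirtinger inequality -/

lemma wirt (M : ℕ) (δ : ℝ) (hδ : 0 < δ) (hM : M * δ = Real.pi) (y : ℕ → ℝ) (h0 : y 0 = 0)
    (n : ℕ) (hn : n ≤ M) (hyn : y n = 0) :
    ∑ k ∈ Finset.range n, (y k * y (k + 1) - Real.cos δ * y k ^ 2) ≤ 0 := by
  have spos : ∀ j : ℕ, 0 < j → j < M → 0 < Real.sin (j * δ) := by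
    intro j hj hjM
    have hj' : (0:ℝ) < j := by exact_mod_cast hj
    have hjM' : (j:ℝ) < M := by exact_mod_cast hjM
    apply Real.sin_pos_of_pos_of_lt_pi
    · positivity
    · rw [← hM]; exact mul_lt_mul_of_pos_right hjM' hδ
  have rec1 : ∀ j : ℕ, Real.sin ((j + 2 : ℕ) * δ) + Real.sin ((j : ℕ) * δ) =
      2 * Real.cos δ * Real.sin ((j + 1 : ℕ) * δ) := by
    intro j
    have e1 : ((j + 2 : ℕ) : ℝ) * δ = (j + 1 : ℕ) * δ + δ := by push_cast; ring
    have e2 : ((j : ℕ) : ℝ) * δ = (j + 1 : ℕ) * δ - δ := by push_cast; ring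
    rw [e1, e2, Real.sin_add, Real.sin_sub]; ring
  have P : ∀ j : ℕ, j + 1 < M →
      Real.sin ((j + 1 : ℕ) * δ) * (2 * ∑ k ∈ Finset.range (j + 1), (y k * y (k + 1) - Real.cos δ * y k ^ 2)) ≤
      Real.sin ((j : ℕ) * δ) * y (j + 1) ^ 2 := by
    intro j
    induction j with
    | zero => intro _; simp [h0]
    | succ j ih =>
      intro hj
      have ih := ih (by omega)
      have s1 := spos (j + 1) (by omega) (by omega)
      have s2 := spos (j + 2) (by omega) (by omega)
      have r := rec1 j
      rw [Finset.sum_range_succ]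
      show Real.sin ((j + 2 : ℕ) * δ) * _ ≤ _
      set S := ∑ k ∈ Finset.range (j + 1), (y k * y (k + 1) - Real.cos δ * y k ^ 2)
      set a := Real.sin ((j : ℕ) * δ)
      set b := Real.sin ((j + 1 : ℕ) * δ)
      set d := Real.sin ((j + 2 : ℕ) * δ)
      show d * (2 * (S + (y (j + 1) * y (j + 2) - Real.cos δ * y (j + 1) ^ 2))) ≤ b * y (j + 2) ^ 2
      -- multiply by b
      have h : b * (d * (2 * (S + (y (j + 1) * y (j + 2) - Real.cos δ * y (j + 1) ^ 2)))) ≤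
          b * (b * y (j + 2) ^ 2) := by
        have h1 := mul_le_mul_of_nonneg_left ih s2.le
        have h2 : 2 * Real.cos δ * b = d + a := r.symm
        have h3 : b * (d * (2 * (S + (y (j + 1) * y (j + 2) - Real.cos δ * y (j + 1) ^ 2)))) =
          d * (b * (2 * S)) + 2 * d * b * y (j + 1) * y (j + 2) - d * (2 * Real.cos δ * b) * y (j + 1) ^ 2 := by ring
        rw [h3, h2]
        nlinarith [sq_nonneg (d * y (j + 1) - b * y (j + 2))]
      exact le_of_mul_le_mul_left h s1
  -- final step
  rcases n with _ | n
  · simp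
  rcases n with _ | n
  · simp [h0]
  have ih := P n (by omega)
  have s1 := spos (n + 1) (by omega) (by omega)
  have s2 : 0 ≤ Real.sin ((n + 2 : ℕ) * δ) := by
    apply Real.sin_nonneg_of_nonneg_of_le_pi
    · positivity
    · rw [← hM]
      have : ((n + 2 : ℕ) : ℝ) ≤ M := by exact_mod_cast hn
      exact mul_le_mul_of_nonneg_right this hδ.le
  have r := rec1 n
  rw [Finset.sum_range_succ, hyn]
  set S := ∑ k ∈ Finset.range (n + 1), (y k * y (k + 1) - Real.cos δ * y k ^ 2)
  set a := Real.sin ((n : ℕ) * δ)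
  set b := Real.sin ((n + 1 : ℕ) * δ)
  set d := Real.sin ((n + 2 : ℕ) * δ)
  have h : b * (2 * (S + (y (n + 1) * 0 - Real.cos δ * y (n + 1) ^ 2))) ≤ b * 0 := by
    have h3 : b * (2 * (S + (y (n + 1) * 0 - Real.cos δ * y (n + 1) ^ 2))) =
      b * (2 * S) - (2 * Real.cos δ * b) * y (n + 1) ^ 2 := by ring
    rw [h3, ← r]
    nlinarith [mul_nonneg s2 (sq_nonneg (y (n + 1)))]
  have := le_of_mul_le_mul_left h s1
  linarith

lemma wirt_cyclic (M N : ℕ) (δ : ℝ) (hδ : 0 < δ) (hM : M * δ = Real.pi) (y : ℕ → ℝ)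
    (hper : ∀ k, y (k + N) = y k) (hz : ∀ i, ∃ j, i ≤ j ∧ j < i + M ∧ y j = 0) :
    ∑ k ∈ Finset.range N, (y k * y (k + 1) - Real.cos δ * y k ^ 2) ≤ 0 := by
  set f : ℕ → ℝ := fun k => y k * y (k + 1) - Real.cos δ * y k ^ 2 with hf
  have step : ∀ a b, a ≤ b → b ≤ a + M → y a = 0 → y b = 0 →
      ∑ k ∈ Finset.range b, f k ≤ ∑ k ∈ Finset.range a, f k := by
    intro a b hab hb ha hb0
    obtain ⟨n, rfl⟩ := Nat.exists_eq_add_of_le hab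
    have := wirt M δ hδ hM (fun k => y (a + k)) (by simpa using ha) n (by omega) hb0
    rw [Finset.sum_range_add]
    have h2 : ∑ k ∈ Finset.range n, f (a + k) ≤ 0 := this
    linarith
  have main : ∀ b a, a ≤ b → y a = 0 → y b = 0 →
      ∑ k ∈ Finset.range b, f k ≤ ∑ k ∈ Finset.range a, f k := by
    intro b
    induction b using Nat.strong_induction_on with
    | _ b ih =>
      intro a hab ha hb
      by_cases h : b ≤ a + M
      · exact step a b hab h ha hb
      · obtain ⟨j, hj1, hj2, hj⟩ := hz (b - M)
        exact (step j b (by omega) (by omega) hj hb).trans (ih j (by omega) a (by omega) ha hj)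
  obtain ⟨a, -, -, ha⟩ := hz 0
  have h1 := main (N + a) a (by omega) ha (by rw [add_comm, hper]; exact ha)
  rw [Finset.sum_range_add] at h1
  have h2 : ∀ k, f (N + k) = f k := by
    intro k
    simp only [hf]
    rw [show N + k + 1 = (k + 1) + N by ring, show N + k = k + N by ring, hper, hper]
  simp only [h2] at h1
  linarith

/-! the linear program -/

lemma exists_gp_ge {m : ℕ} (hm : 0 < m) (c : EuclideanSpace ℝ (Fin 2)) :
    ∃ k ∈ Finset.range (4 * m), ‖c‖ / 2 ≤ gp m (k : ℕ) c := by
  have h0 : gp m 0 c = c 0 := by simp [gp, pr]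
  have h1 : gp m m c = c 1 := by
    simp only [gp, pr, Int.cast_natCast, dl_mul hm]; simp
  have h2 : gp m (2 * m) c = - c 0 := by
    have := gp_add_half hm 0 c
    rw [zero_add, h0] at this; exact this
  have h3 : gp m (m + 2 * m) c = - c 1 := by rw [gp_add_half hm, h1]
  have hn : ‖c‖ ≤ |c 0| + |c 1| := by
    refine abs_le_of_sq_le_sq' ?_ (by positivity) |>.2
    rw [norm_sq_two, ← sq_abs (c 0), ← sq_abs (c 1)]
    nlinarith [mul_nonneg (abs_nonneg (c 0)) (abs_nonneg (c 1))]
  rcases le_total |c 0| |c 1| with h | h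
  · rcases abs_cases (c 1) with ⟨h4, -⟩ | ⟨h4, -⟩
    · exact ⟨m, Finset.mem_range.2 (by omega), by rw [h1]; linarith⟩
    · exact ⟨m + 2 * m, Finset.mem_range.2 (by omega), by push_cast; rw [h3]; linarith⟩
  · rcases abs_cases (c 0) with ⟨h4, -⟩ | ⟨h4, -⟩
    · exact ⟨0, Finset.mem_range.2 (by omega), by push_cast; rw [h0]; linarith⟩
    · exact ⟨2 * m, Finset.mem_range.2 (by omega), by push_cast; rw [h2]; linarith⟩

lemma gp_continuous (m : ℕ) (k : ℤ) : Continuous (gp m k) := pr_continuous _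

lemma forall_of_range {m : ℕ} (hm : 0 < m) {h : ℤ → ℝ} (hh : Function.Periodic h (4 * m : ℤ))
    (H : ∀ k ∈ Finset.range (4 * m), 0 ≤ h (k : ℕ)) (j : ℤ) : 0 ≤ h j := by
  have h1 := per_mod hh 0 j
  rw [h1]
  have h2 : 0 ≤ (j - 0) % (4 * m : ℤ) := Int.emod_nonneg _ (by omega)
  have h3 : (j - 0) % (4 * m : ℤ) < 4 * m := Int.emod_lt_of_pos _ (by omega)
  have := H ((j - 0) % (4 * m : ℤ)).toNat (Finset.mem_range.2 (by omega))
  rw [Int.toNat_of_nonneg h2] at this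
  rwa [zero_add]

lemma exists_opt {m : ℕ} (hm : 0 < m) (h : ℤ → ℝ) (hh : Function.Periodic h (4 * m : ℤ)) :
    ∃ (c : EuclideanSpace ℝ (Fin 2)) (t : ℝ), (∀ k, gp m k c + t ≤ h k) ∧
      ∀ (c' : EuclideanSpace ℝ (Fin 2)) (t' : ℝ), (∀ k, gp m k c' + t' ≤ h k) → t' ≤ t := by
  have hne : (Finset.range (4 * m)).Nonempty := Finset.nonempty_range_iff.2 (by omega)
  let F : EuclideanSpace ℝ (Fin 2) → ℝ := fun c =>
    (Finset.range (4 * m)).inf' hne (fun k => h (k : ℕ) - gp m (k : ℕ) c)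
  have hF : Continuous F :=
    Continuous.finset_inf'_apply hne fun k _ => continuous_const.sub (gp_continuous m k)
  set W := ∑ k ∈ Finset.range (4 * m), |h (k : ℕ)| with hW
  have hFle : ∀ c, F c ≤ W - ‖c‖ / 2 := by
    intro c
    obtain ⟨k, hk, hkc⟩ := exists_gp_ge hm c
    have h1 : F c ≤ h (k : ℕ) - gp m (k : ℕ) c := Finset.inf'_le _ hk
    have h2 : |h (k : ℕ)| ≤ W := Finset.single_le_sum (f := fun k : ℕ => |h (k : ℕ)|)
      (fun i _ => abs_nonneg _) hk
    linarith [le_abs_self (h (k : ℕ))]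
  set ρ := 2 * (W - F 0) with hρ
  have hρ0 : 0 ≤ ρ := by have := hFle 0; simp at this; linarith
  obtain ⟨c, hc, hmax⟩ := (isCompact_closedBall (0 : EuclideanSpace ℝ (Fin 2)) ρ).exists_isMaxOn
    ⟨0, Metric.mem_closedBall_self hρ0⟩ hF.continuousOn
  have hglob : ∀ c', F c' ≤ F c := by
    intro c'
    by_cases h1 : c' ∈ Metric.closedBall (0 : EuclideanSpace ℝ (Fin 2)) ρ
    · exact hmax h1
    · have h2 : F 0 ≤ F c := hmax (Metric.mem_closedBall_self hρ0)
      have h3 := hFle c'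
      rw [mem_closedBall_zero_iff, not_le] at h1
      linarith
  refine ⟨c, F c, ?_, ?_⟩
  · intro k
    have hp : Function.Periodic (fun k => h k - gp m k c - F c) (4 * m : ℤ) := by
      intro k
      simp only [hh k]
      have := gp_periodic hm c k
      simp only at this
      rw [this]
    have := forall_of_range hm hp (fun k hk => by
      have h1 : F c ≤ h (k : ℕ) - gp m (k : ℕ) c := Finset.inf'_le _ hk
      linarith) k
    linarith
  · intro c' t' hc'
    refine le_trans ?_ (hglob c')
    refine Finset.le_inf' _ _ fun k _ => ?_
    linarith [hc' (k : ℕ)]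

lemma exists_contact {m : ℕ} (hm : 0 < m) (h : ℤ → ℝ) (hh : Function.Periodic h (4 * m : ℤ)) :
    ∃ (c : EuclideanSpace ℝ (Fin 2)) (t : ℝ), (∀ k, gp m k c + t ≤ h k) ∧
      (∀ i : ℤ, ∃ j, i ≤ j ∧ j < i + 2 * m ∧ h j - gp m j c - t = 0) ∧
      ∀ (c' : EuclideanSpace ℝ (Fin 2)) (t' : ℝ), (∀ k, gp m k c' + t' ≤ h k) → t' ≤ t := by
  obtain ⟨c, t, hf, hmax⟩ := exists_opt hm h hh
  refine ⟨c, t, hf, ?_, hmax⟩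
  intro i
  by_contra hcon
  push Not at hcon
  obtain ⟨j0, hj0, hj0min⟩ := Finset.exists_min_image (Finset.Ico i (i + 2 * m))
    (fun j => h j - gp m j c - t) ⟨i, by simp; omega⟩
  set ε := h j0 - gp m j0 c - t with hε
  rw [Finset.mem_Ico] at hj0
  have hε0 : 0 < ε := lt_of_le_of_ne (by linarith [hf j0]) (hcon j0 hj0.1 hj0.2).symm
  set ψ : ℝ := (i + (2 * m - 1) / 2) * dl m with hψ
  set η := Real.sin (dl m / 2) with hη
  have hd := dl_pos hm
  have hd2 := dl_le hm
  have hη0 : 0 < η := Real.sin_pos_of_pos_of_lt_pi (by linarith) (by linarith [Real.pi_pos])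
  have hη1 : η ≤ 1 := Real.sin_le_one _
  have hfeas : ∀ k, gp m k (c + (ε / 2) • uvec ψ) + (t + ε / 2 * η) ≤ h k := by
    intro k
    have hp : Function.Periodic (fun k => h k - gp m k (c + (ε / 2) • uvec ψ)) (4 * m : ℤ) := by
      intro k
      simp only [hh k]
      have := gp_periodic hm (c + (ε / 2) • uvec ψ) k
      simp only at this
      rw [this]
    have h1 := per_mod hp i k
    set j := i + (k - i) % (4 * m : ℤ) with hj
    have hj1 : 0 ≤ (k - i) % (4 * m : ℤ) := Int.emod_nonneg _ (by omega)
    have hj2 : (k - i) % (4 * m : ℤ) < 4 * m := Int.emod_lt_of_pos _ (by omega)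
    suffices hs : gp m j (c + (ε / 2) • uvec ψ) + (t + ε / 2 * η) ≤ h j by linarith
    have e : gp m j (c + (ε / 2) • uvec ψ) = gp m j c + ε / 2 * Real.cos (j * dl m - ψ) := by
      unfold gp; rw [pr_add, pr_smul, pr_uvec]
    rw [e]
    by_cases hw : j < i + 2 * m
    · have h2 := hj0min j (Finset.mem_Ico.2 ⟨by omega, hw⟩)
      have h3 := Real.cos_le_one (j * dl m - ψ)
      nlinarith
    · have hcos : Real.cos (j * dl m - ψ) ≤ - η := by
        have hj3 : (i : ℝ) + 2 * m ≤ j := by exact_mod_cast not_lt.1 hw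
        have hj4 : (j : ℝ) + 1 ≤ i + 4 * m := by
          have : j + 1 ≤ i + 4 * m := by omega
          exact_mod_cast this
        have hdm := dl_mul hm
        have e1 : Real.cos (j * dl m - ψ) = - Real.cos |j * dl m - ψ - Real.pi| := by
          rw [Real.cos_abs, Real.cos_sub_pi, neg_neg]
        have e2 : η = Real.cos (Real.pi / 2 - dl m / 2) := by rw [Real.cos_pi_div_two_sub]
        rw [e1, e2, neg_le_neg_iff]
        apply Real.cos_le_cos_of_nonneg_of_le_pi (abs_nonneg _) (by linarith [Real.pi_pos])
        rw [abs_le, hψ]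
        have a1 := mul_le_mul_of_nonneg_right hj3 hd.le
        have a2 := mul_le_mul_of_nonneg_right hj4 hd.le
        constructor <;> nlinarith
      have := hf j
      nlinarith
  have := hmax _ _ hfeas
  nlinarith [mul_pos hε0 hη0]


/-! area bound -/

def wedge (h α β : ℝ) : Set (ℝ × ℝ) := {z | 0 ≤ z.1 ∧ z.1 ≤ h ∧ α * z.1 ≤ z.2 ∧ z.2 ≤ β * z.1}

lemma wedge_closed (h α β : ℝ) : IsClosed (wedge h α β) := by
  have h1 : IsClosed {z : ℝ × ℝ | 0 ≤ z.1} := isClosed_le (by fun_prop) (by fun_prop)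
  have h2 : IsClosed {z : ℝ × ℝ | z.1 ≤ h} := isClosed_le (by fun_prop) (by fun_prop)
  have h3 : IsClosed {z : ℝ × ℝ | α * z.1 ≤ z.2} := isClosed_le (by fun_prop) (by fun_prop)
  have h4 : IsClosed {z : ℝ × ℝ | z.2 ≤ β * z.1} := isClosed_le (by fun_prop) (by fun_prop)
  exact h1.inter (h2.inter (h3.inter h4))

lemma volume_wedge (h α β : ℝ) (hh : 0 ≤ h) (hαβ : α ≤ β) :
    volume (wedge h α β) = ENNReal.ofReal ((β - α) * h ^ 2 / 2) := by
  rw [Measure.volume_eq_prod, Measure.prod_apply (wedge_closed h α β).measurableSet]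
  have h1 : ∀ s : ℝ, volume (Prod.mk s ⁻¹' wedge h α β) =
      (Set.Icc 0 h).indicator (fun s => ENNReal.ofReal ((β - α) * s)) s := by
    intro s
    by_cases hs : s ∈ Set.Icc 0 h
    · rw [Set.indicator_of_mem hs]
      have : Prod.mk s ⁻¹' wedge h α β = Set.Icc (α * s) (β * s) := by
        ext y
        simp only [wedge, Set.mem_preimage, Set.mem_ofPred_eq, Set.mem_Icc]
        exact ⟨fun h => h.2.2, fun h => ⟨hs.1, hs.2, h⟩⟩
      rw [this, Real.volume_Icc]
      congr 1; ring
    · rw [Set.indicator_of_notMem hs]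
      have : Prod.mk s ⁻¹' wedge h α β = ∅ := by
        ext y
        simp only [wedge, Set.mem_preimage, Set.mem_ofPred_eq, Set.mem_empty_iff_false, iff_false]
        exact fun h => hs ⟨h.1, h.2.1⟩
      rw [this, measure_empty]
  simp_rw [h1]
  rw [lintegral_indicator measurableSet_Icc, ← ofReal_integral_eq_lintegral_ofReal]
  · congr 1
    rw [integral_Icc_eq_integral_Ioc, ← intervalIntegral.integral_of_le hh,
      intervalIntegral.integral_const_mul, integral_id]
    ring
  · exact (Continuous.integrableOn_Icc (by fun_prop))
  · refine (ae_restrict_iff' measurableSet_Icc).2 (Filter.Eventually.of_forall fun s hs => ?_)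
    exact mul_nonneg (by linarith) hs.1

def rotL (θ : ℝ) : EuclideanSpace ℝ (Fin 2) →ₗᵢ[ℝ] EuclideanSpace ℝ (Fin 2) where
  toFun x := !₂[pr θ x, pr (θ + Real.pi / 2) x]
  map_add' x y := by ext i; fin_cases i <;> simp [pr_add]
  map_smul' a x := by ext i; fin_cases i <;> simp [pr_smul]
  norm_map' x := by
    refine (pow_left_inj₀ (norm_nonneg _) (norm_nonneg _) (two_ne_zero)).1 ?_
    rw [norm_sq_two, norm_sq_two]
    have hs := Real.sin_sq_add_cos_sq θ
    simp [pr, Real.cos_add_pi_div_two, Real.sin_add_pi_div_two]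
    linear_combination (x 0 ^ 2 + x 1 ^ 2) * hs

lemma volume_rot_preimage (θ : ℝ) (S : Set (ℝ × ℝ)) (hS : MeasurableSet S) :
    volume {x : EuclideanSpace ℝ (Fin 2) | (pr θ x, pr (θ + Real.pi / 2) x) ∈ S} = volume S := by
  let e := (rotL θ).toLinearIsometryEquiv rfl
  have h1 : MeasurePreserving e volume volume := e.measurePreserving
  have h2 := (EuclideanSpace.volume_preserving_symm_measurableEquiv_toLp (Fin 2))
  have h3 := volume_preserving_finTwoArrow ℝ
  have h4 := (h3.comp h2).comp h1
  rw [← h4.measure_preimage hS.nullMeasurableSet]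
  rfl

lemma area_le {m : ℕ} (hm : 0 < m) (K : Set (EuclideanSpace ℝ (Fin 2))) (h : ℤ → ℝ)
    (hh : Function.Periodic h (4 * m : ℤ)) (hpos : ∀ k, 0 < h k)
    (hsub : ∀ k, 0 ≤ h (k + 1) + h (k - 1) - 2 * Real.cos (dl m) * h k)
    (hK : ∀ x ∈ K, ∀ k, gp m k x ≤ h k) :
    (volume K).toReal ≤ ∑ k ∈ Finset.range (4 * m),
      h (k : ℕ) * (h ((k : ℕ) + 1) + h ((k : ℕ) - 1) - 2 * Real.cos (dl m) * h (k : ℕ)) / (2 * Real.sin (dl m)) := by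
  have hd := dl_pos hm
  have hd2 := dl_le hm
  have hs : 0 < Real.sin (dl m) := Real.sin_pos_of_pos_of_lt_pi hd (by linarith [Real.pi_pos])
  set s := Real.sin (dl m) with hsdef
  set c := Real.cos (dl m) with hcdef
  let α : ℤ → ℝ := fun k => - (h (k - 1) - c * h k) / (s * h k)
  let β : ℤ → ℝ := fun k => (h (k + 1) - c * h k) / (s * h k)
  let T : ℕ → Set (EuclideanSpace ℝ (Fin 2)) := fun k =>
    {x | (pr (((k : ℕ) : ℤ) * dl m) x, pr (((k : ℕ) : ℤ) * dl m + Real.pi / 2) x) ∈ wedge (h k) (α k) (β k)}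
  have hαβ : ∀ k, β k - α k = (h (k + 1) + h (k - 1) - 2 * c * h k) / (s * h k) := by
    intro k; simp only [α, β]; rw [← sub_div]; congr 1; ring
  have hαβ' : ∀ k, α k ≤ β k := by
    intro k
    rw [← sub_nonneg, hαβ]
    exact div_nonneg (hsub k) (mul_pos hs (hpos k)).le
  have hnn : ∀ k : ℤ, 0 ≤ h k * (h (k + 1) + h (k - 1) - 2 * c * h k) / (2 * s) := fun k =>
    div_nonneg (mul_nonneg (hpos k).le (hsub k)) (by linarith)
  have hnn' : ∀ k ∈ Finset.range (4 * m), 0 ≤ h (k : ℕ) * (h ((k : ℕ) + 1) + h ((k : ℕ) - 1)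
      - 2 * c * h (k : ℕ)) / (2 * s) := fun k _ => hnn k
  have hT : ∀ k : ℕ, volume (T k) = ENNReal.ofReal
      (h (k : ℕ) * (h ((k : ℕ) + 1) + h ((k : ℕ) - 1) - 2 * c * h (k : ℕ)) / (2 * s)) := by
    intro k
    simp only [T]
    rw [volume_rot_preimage _ _ (wedge_closed _ _ _).measurableSet, volume_wedge _ _ _ (hpos k).le (hαβ' k), hαβ]
    congr 1
    have := (hpos k).ne'
    field_simp
  have hcover : K ⊆ ⋃ k ∈ Finset.range (4 * m), T k := by
    intro x hx
    obtain ⟨k, hk, hkmax⟩ := Finset.exists_max_image (Finset.range (4 * m))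
      (fun k : ℕ => gp m (k : ℕ) x / h (k : ℕ)) (Finset.nonempty_range_iff.2 (by omega))
    have hp : Function.Periodic (fun j => gp m (k : ℕ) x / h (k : ℕ) - gp m j x / h j) (4 * m : ℤ) := by
      intro j
      have := gp_periodic hm x j
      simp only at this
      simp only [this, hh j]
    have hall : ∀ j : ℤ, gp m j x / h j ≤ gp m (k : ℕ) x / h (k : ℕ) := by
      intro j
      have := forall_of_range hm hp (fun i hi => sub_nonneg.2 (hkmax i hi)) j
      simpa using this
    have hp0 : 0 ≤ gp m (k : ℕ) x := by
      obtain ⟨j, -, hj⟩ := exists_gp_ge hm x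
      have h1 : 0 ≤ gp m (j : ℕ) x / h (j : ℕ) :=
        div_nonneg (le_trans (by positivity) hj) (hpos _).le
      have h2 := h1.trans (hall j)
      rcases div_nonneg_iff.1 h2 with h3 | h3
      · exact h3.1
      · linarith [hpos (k : ℕ)]
    simp only [Set.mem_iUnion]
    refine ⟨k, hk, ?_⟩
    have hq1 : gp m ((k : ℕ) + 1) x = c * gp m (k : ℕ) x + s * pr (((k : ℕ) : ℤ) * dl m + Real.pi / 2) x := by
      unfold gp pr
      push_cast
      rw [add_mul, one_mul, Real.cos_add, Real.sin_add, Real.cos_add_pi_div_two, Real.sin_add_pi_div_two]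
      ring
    have hq2 := gp_second_diff m (k : ℕ) x
    have a1 := hall ((k : ℕ) + 1)
    have a2 := hall ((k : ℕ) - 1)
    rw [div_le_div_iff₀ (hpos _) (hpos _)] at a1 a2
    have hsh : 0 < s * h (k : ℕ) := mul_pos hs (hpos _)
    refine ⟨hp0, hK x hx _, ?_, ?_⟩
    · show α k * gp m (k : ℕ) x ≤ _
      simp only [α]
      rw [div_mul_eq_mul_div, div_le_iff₀ hsh]
      have e2 : gp m ((k : ℕ) - 1) x = c * gp m (k : ℕ) x - s * pr (((k : ℕ) : ℤ) * dl m + Real.pi / 2) x := by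
        linarith
      rw [e2] at a2
      linarith
    · show _ ≤ β k * gp m (k : ℕ) x
      simp only [β]
      rw [div_mul_eq_mul_div, le_div_iff₀ hsh]
      rw [hq1] at a1
      linarith
  have hle : volume K ≤ ENNReal.ofReal (∑ k ∈ Finset.range (4 * m),
      h (k : ℕ) * (h ((k : ℕ) + 1) + h ((k : ℕ) - 1) - 2 * c * h (k : ℕ)) / (2 * s)) := by
    rw [ENNReal.ofReal_sum_of_nonneg hnn']
    refine (measure_mono hcover).trans ((measure_biUnion_finset_le _ _).trans ?_)
    exact Finset.sum_le_sum fun k _ => (hT k).le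
  have := ENNReal.toReal_mono ENNReal.ofReal_ne_top hle
  rwa [ENNReal.toReal_ofReal (Finset.sum_nonneg hnn')] at this

/-! algebra of the quadratic form -/

lemma sum_shift (N : ℕ) (f : ℤ → ℝ) (hf : Function.Periodic f (N : ℤ)) :
    ∑ k ∈ Finset.range N, f ((k : ℕ) + 1) = ∑ k ∈ Finset.range N, f (k : ℕ) := by
  have h1 := Finset.sum_range_succ (fun k : ℕ => f (k : ℕ)) N
  have h2 := Finset.sum_range_succ' (fun k : ℕ => f (k : ℕ)) N
  have h3 : f ((N : ℕ) : ℤ) = f 0 := by have := hf 0; rwa [zero_add] at this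
  push_cast at h2
  rw [h1, h3] at h2
  linarith

lemma sum_shift_add (N : ℕ) (f : ℤ → ℝ) (hf : Function.Periodic f (N : ℤ)) (n : ℕ) :
    ∑ k ∈ Finset.range N, f ((k : ℕ) + n) = ∑ k ∈ Finset.range N, f (k : ℕ) := by
  induction n with
  | zero => simp
  | succ n ih =>
    have := sum_shift N (fun k => f (k + n)) (fun k => by
      simp only
      rw [show k + (N:ℤ) + n = (k + n) + N by ring, hf])
    rw [← ih, ← this]
    refine Finset.sum_congr rfl fun k _ => ?_
    congr 1; push_cast; ring

lemma form_le {m : ℕ} (hm : 0 < m) (h e : ℤ → ℝ) (p : EuclideanSpace ℝ (Fin 2)) (t : ℝ)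
    (hh : Function.Periodic h (4 * m : ℤ))
    (he : ∀ k, h k = e k + t + gp m k p)
    (hw : ∑ k ∈ Finset.range (4 * m), (e (k : ℕ) * e ((k : ℕ) + 1) - Real.cos (dl m) * e (k : ℕ) ^ 2) ≤ 0) :
    ∑ k ∈ Finset.range (4 * m),
      h (k : ℕ) * (h ((k : ℕ) + 1) + h ((k : ℕ) - 1) - 2 * Real.cos (dl m) * h (k : ℕ)) / (2 * Real.sin (dl m))
    ≤ (1 - Real.cos (dl m)) / Real.sin (dl m) *
      (2 * t * ∑ k ∈ Finset.range (4 * m), h (k : ℕ) - 4 * m * t ^ 2) := by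
  have hd := dl_pos hm
  have hd2 := dl_le hm
  have hs : 0 < Real.sin (dl m) := Real.sin_pos_of_pos_of_lt_pi hd (by linarith [Real.pi_pos])
  have hpl := gp_periodic hm p
  have hpe : Function.Periodic e (4 * m : ℤ) := by
    intro k
    have h1 := he k
    have h2 := he (k + 4 * m)
    have h3 := hpl k
    simp only at h3
    rw [hh, h3] at h2
    linarith
  have hc1 : Real.cos (dl m) < 1 := by
    rw [← Real.cos_zero]
    exact Real.cos_lt_cos_of_nonneg_of_le_pi_div_two le_rfl hd2 hd
  set c := Real.cos (dl m)
  set s := Real.sin (dl m)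
  have hN : ((4 * m : ℕ) : ℤ) = 4 * (m : ℤ) := by push_cast; ring
  have hpe1 : ∀ k, e (k + 4 * m) = e k := hpe
  have hpl1 : ∀ k, gp m (k + 4 * m) p = gp m k p := hpl
  -- shifts
  have S1 := sum_shift (4 * m) (fun k => e k * e (k - 1)) (fun k => by
    simp only [hN]
    rw [show k + 4 * (m:ℤ) - 1 = (k - 1) + 4 * m by ring, hpe1, hpe1])
  have S2 := sum_shift (4 * m) e (by rw [hN]; exact hpe)
  have S3 := sum_shift (4 * m) (fun k => e (k - 1)) (fun k => by
    simp only [hN]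
    rw [show k + 4 * (m:ℤ) - 1 = (k - 1) + 4 * m by ring, hpe1])
  have S4 := sum_shift (4 * m) (fun k => gp m k p * e (k - 1)) (fun k => by
    simp only [hN]
    rw [show k + 4 * (m:ℤ) - 1 = (k - 1) + 4 * m by ring, hpe1, hpl1])
  have S5 := sum_shift (4 * m) (fun k => gp m (k - 1) p * e k) (fun k => by
    simp only [hN]
    rw [show k + 4 * (m:ℤ) - 1 = (k - 1) + 4 * m by ring, hpe1, hpl1])
  have S6 := sum_shift (4 * m) (fun k => gp m k p) (by rw [hN]; exact hpl)
  have S7 := sum_shift (4 * m) (fun k => gp m (k - 1) p) (fun k => by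
    simp only [hN]
    rw [show k + 4 * (m:ℤ) - 1 = (k - 1) + 4 * m by ring, hpl1])
  simp only [add_sub_cancel_right] at S1 S3 S4 S5 S7
  have hl0 : ∑ k ∈ Finset.range (4 * m), gp m (k : ℕ) p = 0 := by
    have h1 : ∑ k ∈ Finset.range (4 * m), (gp m ((k : ℕ) + 1) p + gp m ((k : ℕ) - 1) p) =
      ∑ k ∈ Finset.range (4 * m), 2 * c * gp m (k : ℕ) p :=
      Finset.sum_congr rfl fun k _ => gp_second_diff m k p
    rw [Finset.sum_add_distrib, ← Finset.mul_sum, S6, ← S7] at h1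
    have h2 : (1 - c) * ∑ k ∈ Finset.range (4 * m), gp m (k : ℕ) p = 0 := by linarith
    rcases mul_eq_zero.1 h2 with h3 | h3
    · linarith
    · exact h3
  have hle : ∑ k ∈ Finset.range (4 * m), gp m (k : ℕ) p * (e ((k : ℕ) + 1) + e ((k : ℕ) - 1) - 2 * c * e (k : ℕ)) = 0 := by
    have h1 : ∀ k ∈ Finset.range (4 * m), gp m (k : ℕ) p * (e ((k : ℕ) + 1) + e ((k : ℕ) - 1) - 2 * c * e (k : ℕ)) =
      (gp m (k : ℕ) p * e ((k : ℕ) + 1) - gp m ((k : ℕ) - 1) p * e (k : ℕ)) +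
      (gp m (k : ℕ) p * e ((k : ℕ) - 1) - gp m ((k : ℕ) + 1) p * e (k : ℕ)) := by
      intro k _
      linear_combination e (k : ℕ) * gp_second_diff m k p
    rw [Finset.sum_congr rfl h1, Finset.sum_add_distrib, Finset.sum_sub_distrib, Finset.sum_sub_distrib]
    linarith
  have hsumh : ∑ k ∈ Finset.range (4 * m), h (k : ℕ) = ∑ k ∈ Finset.range (4 * m), e (k : ℕ) + 4 * m * t := by
    simp only [he]
    rw [Finset.sum_add_distrib, Finset.sum_add_distrib, hl0]
    simp
  have hmain : ∑ k ∈ Finset.range (4 * m), h (k : ℕ) * (h ((k : ℕ) + 1) + h ((k : ℕ) - 1) - 2 * c * h (k : ℕ)) =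
      2 * ∑ k ∈ Finset.range (4 * m), (e (k : ℕ) * e ((k : ℕ) + 1) - c * e (k : ℕ) ^ 2) +
      2 * (1 - c) * (2 * t * ∑ k ∈ Finset.range (4 * m), h (k : ℕ) - 4 * m * t ^ 2) := by
    have h1 : ∀ k ∈ Finset.range (4 * m), h (k : ℕ) * (h ((k : ℕ) + 1) + h ((k : ℕ) - 1) - 2 * c * h (k : ℕ)) =
        (e (k : ℕ) * e ((k : ℕ) + 1) - c * e (k : ℕ) ^ 2) + (e (k : ℕ) * e ((k : ℕ) - 1) - c * e (k : ℕ) ^ 2)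
        + t * (e ((k : ℕ) + 1) + e ((k : ℕ) - 1) - 2 * c * e (k : ℕ))
        + gp m (k : ℕ) p * (e ((k : ℕ) + 1) + e ((k : ℕ) - 1) - 2 * c * e (k : ℕ))
        + 2 * t * (1 - c) * h (k : ℕ) := by
      intro k _
      have h2 := gp_second_diff m k p
      rw [he, he, he]
      linear_combination (e (k : ℕ) + t + gp m (k : ℕ) p) * h2
    rw [Finset.sum_congr rfl h1]
    simp only [Finset.sum_add_distrib, hle, Finset.sum_sub_distrib, ← Finset.mul_sum]
    rw [hsumh]
    have S1' : ∑ k ∈ Finset.range (4 * m), e (k : ℕ) * e ((k : ℕ) + 1) =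
      ∑ k ∈ Finset.range (4 * m), e (k : ℕ) * e ((k : ℕ) - 1) := by
      rw [← S1]; exact Finset.sum_congr rfl fun k _ => mul_comm _ _
    rw [S1', S2, ← S3]
    ring
  rw [← Finset.sum_div, hmain, div_le_iff₀ (by linarith)]
  have : (1 - c) / s * (2 * t * ∑ k ∈ Finset.range (4 * m), h (k : ℕ) - 4 * m * t ^ 2) * (2 * s) =
    2 * (1 - c) * (2 * t * ∑ k ∈ Finset.range (4 * m), h (k : ℕ) - 4 * m * t ^ 2) := by
    field_simp
  rw [this]
  linarith


/-! support function on the grid -/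

def supp (m : ℕ) (K : Set (EuclideanSpace ℝ (Fin 2))) (k : ℤ) : ℝ := sSup (gp m k '' K)

lemma supp_attained (m : ℕ) {K : Set (EuclideanSpace ℝ (Fin 2))} (hcomp : IsCompact K)
    (hne : K.Nonempty) (k : ℤ) : ∃ x ∈ K, gp m k x = supp m K k :=
  (hcomp.image (gp_continuous m k)).sSup_mem (hne.image _)

lemma le_supp (m : ℕ) {K : Set (EuclideanSpace ℝ (Fin 2))} (hcomp : IsCompact K) (k : ℤ)
    {x : EuclideanSpace ℝ (Fin 2)} (hx : x ∈ K) : gp m k x ≤ supp m K k :=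
  le_csSup (hcomp.image (gp_continuous m k)).bddAbove (mem_image_of_mem _ hx)

lemma supp_periodic {m : ℕ} (hm : 0 < m) (K : Set (EuclideanSpace ℝ (Fin 2))) :
    Function.Periodic (supp m K) (4 * m : ℤ) := by
  intro k
  have : gp m (k + 4 * m) = gp m k := funext fun x => gp_periodic hm x k
  simp only [supp, this]

lemma supp_second_diff {m : ℕ} {K : Set (EuclideanSpace ℝ (Fin 2))} (hcomp : IsCompact K)
    (hne : K.Nonempty) (k : ℤ) :
    0 ≤ supp m K (k + 1) + supp m K (k - 1) - 2 * Real.cos (dl m) * supp m K k := by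
  obtain ⟨x, hx, hxk⟩ := supp_attained m hcomp hne k
  rw [← hxk, ← gp_second_diff]
  linarith [le_supp m hcomp (k + 1) hx, le_supp m hcomp (k - 1) hx]

lemma lt_supp_of_interior (m : ℕ) {K : Set (EuclideanSpace ℝ (Fin 2))} (hcomp : IsCompact K)
    (k : ℤ) {x : EuclideanSpace ℝ (Fin 2)} (hx : x ∈ interior K) : gp m k x < supp m K k := by
  obtain ⟨ε, hε, hball⟩ := Metric.isOpen_iff.1 isOpen_interior x hx
  have h1 : x + (ε / 2) • uvec (k * dl m) ∈ K := by
    apply interior_subset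
    apply hball
    rw [Metric.mem_ball, dist_eq_norm, add_sub_cancel_left, norm_smul, norm_uvec, Real.norm_eq_abs,
      abs_of_pos (by positivity)]
    linarith
  have h2 := le_supp m hcomp k h1
  unfold gp at h2 ⊢
  rw [pr_add, pr_smul, pr_uvec, sub_self, Real.cos_zero] at h2
  linarith

lemma key_bound (K : Set (EuclideanSpace ℝ (Fin 2)))
    (hcomp : IsCompact K) (hconv : Convex ℝ K) (hint : (interior K).Nonempty)
    (γ : ℝ → EuclideanSpace ℝ (Fin 2))
    (hγcont : ContinuousOn γ (Set.Icc 0 1))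
    (hγclosed : γ 0 = γ 1)
    (hγinj : Set.InjOn γ (Set.Ico 0 1))
    (hγimg : γ '' Set.Icc 0 1 = frontier K)
    (L : ℝ) (hL : L = (eVariationOn γ (Set.Icc 0 1)).toReal)
    {m : ℕ} (hm : 0 < m) (e : ℤ → ℝ) (p : EuclideanSpace ℝ (Fin 2)) (t : ℝ) (ht : 0 ≤ t)
    (he : ∀ k, supp m K k = e k + t + gp m k p)
    (hz : ∀ i : ℤ, ∃ j, i ≤ j ∧ j < i + 2 * m ∧ e j = 0) :
    (volume K).toReal ≤ t * L / Real.cos (dl m / 2) - Real.pi * t ^ 2 := by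
  have hd := dl_pos hm
  have hd2 := dl_le hm
  have hdm := dl_mul hm
  have hpi := Real.pi_pos
  have hs : 0 < Real.sin (dl m / 2) := Real.sin_pos_of_pos_of_lt_pi (by linarith) (by linarith)
  have hc : 0 < Real.cos (dl m / 2) := Real.cos_pos_of_mem_Ioo ⟨by linarith, by linarith⟩
  have hne : K.Nonempty := hint.mono interior_subset
  have hfin := variation_ne_top K hcomp hconv hint γ hγcont hγinj hγimg
  set h := supp m K with hh
  have hper : Function.Periodic h (4 * m : ℤ) := supp_periodic hm K
  -- length bound
  have hτ : ∀ k : ℤ, ∃ τ ∈ Set.Icc (0:ℝ) 1, gp m k (γ τ) = h k := by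
    intro k
    obtain ⟨x, hx, hxk⟩ := supp_attained m hcomp hne k
    have hxf : x ∈ frontier K := by
      refine ⟨subset_closure hx, fun hxi => ?_⟩
      exact (lt_supp_of_interior m hcomp k hxi).ne hxk
    rw [← hγimg] at hxf
    obtain ⟨τ, hτ, rfl⟩ := hxf
    exact ⟨τ, hτ, hxk⟩
  choose τ hτ1 hτ2 using hτ
  have hlen : Real.sin (dl m / 2) * (2 * ∑ k ∈ Finset.range (4 * m), h (k : ℕ)) ≤ L := by
    have h1 := sum_width_le γ hγclosed hfin (4 * m) (dl m) hd.le (by linarith)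
      (by push_cast; linarith) (fun k => τ k) (fun k => τ ((k : ℤ) + 2 * m)) (fun k => hτ1 _) (fun k => hτ1 _)
    rw [← hL] at h1
    refine le_trans (le_of_eq ?_) h1
    congr 1
    have h2 := sum_shift_add (4 * m) h (by push_cast; exact hper) (2 * m)
    have h3 : ∀ k ∈ Finset.range (4 * m), pr (k * dl m) (γ (τ k)) - pr (k * dl m) (γ (τ ((k : ℤ) + 2 * m))) =
        h (k : ℕ) + h ((k : ℕ) + (2 * m : ℕ)) := by
      intro k _
      have e1 : pr (k * dl m) (γ (τ k)) = h (k : ℕ) := by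
        have := hτ2 k; unfold gp at this; simpa using this
      have e2 : pr (k * dl m) (γ (τ ((k : ℤ) + 2 * m))) = - h ((k : ℕ) + (2 * m : ℕ)) := by
        have := hτ2 ((k : ℤ) + 2 * m)
        rw [gp_add_half hm] at this
        push_cast
        rw [← this]; simp [gp]
      rw [e1, e2]; ring
    rw [Finset.sum_congr rfl h3, Finset.sum_add_distrib, h2]; ring
  -- Wirtinger
  have hpe : ∀ k, e (k + 4 * m) = e k := by
    intro k
    have h1 := he k
    have h2 := he (k + 4 * m)
    have h3 := gp_periodic hm p k
    simp only at h3
    rw [hper, h3] at h2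
    linarith
  have hw : ∑ k ∈ Finset.range (4 * m), (e (k : ℕ) * e ((k : ℕ) + 1) - Real.cos (dl m) * e (k : ℕ) ^ 2) ≤ 0 := by
    have := wirt_cyclic (2 * m) (4 * m) (dl m) hd (by push_cast; linarith) (fun k => e (k : ℕ))
      (fun k => by push_cast; exact hpe k) (fun i => by
        obtain ⟨j, hj1, hj2, hj⟩ := hz i
        refine ⟨j.toNat, by omega, by omega, ?_⟩
        rw [Int.toNat_of_nonneg (by omega)]; exact hj)
    push_cast at this
    exact this
  -- area
  obtain ⟨o, ho⟩ := hint
  have hA := area_le hm ((fun x => x + o) ⁻¹' K) (fun k => h k - gp m k o)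
    (fun k => by
      have := gp_periodic hm o k
      simp only at this
      simp only [hper k, this])
    (fun k => sub_pos.2 (lt_supp_of_interior m hcomp k ho))
    (fun k => by
      have h1 := supp_second_diff (m := m) hcomp hne k
      have h2 := gp_second_diff m k o
      simp only [← hh] at h1
      linarith)
    (fun x hx k => by
      have h1 := le_supp m hcomp k (show x + o ∈ K from hx)
      simp only [gp, pr_add] at h1 ⊢
      linarith)
  rw [measure_preimage_add_right] at hA
  have hB := form_le hm (fun k => h k - gp m k o) e (p - o) t
    (fun k => by
      have := gp_periodic hm o k
      simp only at this
      simp only [hper k, this])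
    (fun k => by
      simp only [he k]
      simp only [gp, pr_sub]; ring) hw
  have hsum0 : ∑ k ∈ Finset.range (4 * m), gp m (k : ℕ) o = 0 := by
    have h2 := sum_shift_add (4 * m) (fun k => gp m k o) (by push_cast; exact gp_periodic hm o) (2 * m)
    have h3 : ∀ k ∈ Finset.range (4 * m), gp m ((k : ℕ) + (2 * m : ℕ)) o = - gp m (k : ℕ) o := by
      intro k _
      push_cast
      exact gp_add_half hm k o
    rw [Finset.sum_congr rfl h3, Finset.sum_neg_distrib] at h2
    linarith
  rw [Finset.sum_sub_distrib, hsum0, sub_zero] at hB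
  have hA := hA.trans hB
  set H := ∑ k ∈ Finset.range (4 * m), h (k : ℕ)
  set s := Real.sin (dl m / 2)
  set c := Real.cos (dl m / 2)
  have hsc : s ^ 2 + c ^ 2 = 1 := Real.sin_sq_add_cos_sq _
  have e1 : Real.cos (dl m) = 1 - 2 * s ^ 2 := by
    have : dl m = 2 * (dl m / 2) := by ring
    rw [this, Real.cos_two_mul]; linarith
  have e2 : Real.sin (dl m) = 2 * s * c := by
    have : dl m = 2 * (dl m / 2) := by ring
    rw [this, Real.sin_two_mul]
  have e3 : (1 - Real.cos (dl m)) / Real.sin (dl m) = s / c := by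
    rw [e1, e2]; field_simp; ring
  rw [e3] at hA
  have htan : dl m / 2 ≤ s / c := by
    have := Real.le_tan (x := dl m / 2) (by linarith) (by linarith)
    rwa [Real.tan_eq_sin_div_cos] at this
  have h5 : s / c * (2 * t * H - 4 * m * t ^ 2) = t * (s * (2 * H)) / c - (4 * m * (s / c)) * t ^ 2 := by
    field_simp
  rw [h5] at hA
  have h6 : t * (s * (2 * H)) / c ≤ t * L / c := by gcongr
  have h7 : Real.pi ≤ 4 * m * (s / c) := by
    have : (0:ℝ) ≤ 4 * m := by positivity
    have := mul_le_mul_of_nonneg_left htan this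
    linarith
  have h8 := mul_le_mul_of_nonneg_right h7 (sq_nonneg t)
  linarith

lemma exists_near {m : ℕ} (hm : 0 < m) (θ : ℝ) : ∃ k : ℤ, |θ - k * dl m| ≤ dl m := by
  have hd := dl_pos hm
  refine ⟨⌊θ / dl m⌋, ?_⟩
  have h1 := Int.floor_le (θ / dl m)
  have h2 := (Int.lt_floor_add_one (θ / dl m)).le
  rw [le_div_iff₀ hd] at h1
  rw [div_le_iff₀ hd] at h2
  rw [abs_le]; constructor <;> linarith

lemma exists_sep {K : Set (EuclideanSpace ℝ (Fin 2))} (hcl : IsClosed K) (hconv : Convex ℝ K)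
    (hne : K.Nonempty) (x : EuclideanSpace ℝ (Fin 2)) (hx : x ∉ K) :
    ∃ φ : ℝ, ∀ a ∈ K, pr φ a < pr φ x := by
  obtain ⟨f, u, hfK, hfx⟩ := geometric_hahn_banach_closed_point hconv hcl hx
  set w : EuclideanSpace ℝ (Fin 2) :=
    !₂[f (EuclideanSpace.single 0 1), f (EuclideanSpace.single 1 1)] with hw
  have hf : ∀ y : EuclideanSpace ℝ (Fin 2), f y = y 0 * w 0 + y 1 * w 1 := by
    intro y
    have hy : y = y 0 • EuclideanSpace.single 0 1 + y 1 • EuclideanSpace.single 1 1 := by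
      ext i; fin_cases i <;> simp
    conv_lhs => rw [hy]
    rw [map_add, map_smul, map_smul]
    simp [hw]
  obtain ⟨φ, hφ⟩ := exists_polar w
  have h0 : w 0 = ‖w‖ * Real.cos φ := by have := hφ 0; simpa [pr] using this
  have h1 : w 1 = ‖w‖ * Real.sin φ := by
    have := hφ (Real.pi / 2); rw [Real.cos_pi_div_two_sub] at this; simpa [pr] using this
  have hf2 : ∀ y, f y = ‖w‖ * pr φ y := by
    intro y; rw [hf, h0, h1, pr]; ring
  refine ⟨φ, fun a ha => ?_⟩
  have h2 := (hfK a ha).trans hfx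
  rw [hf2, hf2] at h2
  exact lt_of_mul_lt_mul_left h2 (norm_nonneg w)

lemma ball_le {c c' : EuclideanSpace ℝ (Fin 2)} {ρ ρ' : ℝ} (hρ : 0 ≤ ρ)
    (h : Metric.closedBall c ρ ⊆ Metric.closedBall c' ρ') : ρ ≤ ρ' := by
  have h1 : ∀ a : ℝ, |a| ≤ ρ → c + a • uvec 0 ∈ Metric.closedBall c' ρ' := by
    intro a ha
    apply h
    rw [Metric.mem_closedBall, dist_eq_norm, add_sub_cancel_left, norm_smul, norm_uvec, mul_one]
    exact ha
  have h2 := h1 ρ (abs_of_nonneg hρ).le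
  have h3 := h1 (-ρ) (by rw [abs_neg, abs_of_nonneg hρ])
  rw [Metric.mem_closedBall] at h2 h3
  have h4 := dist_triangle_right (c + ρ • uvec 0) (c + (-ρ) • uvec 0) c'
  have h5 : dist (c + ρ • uvec 0) (c + (-ρ) • uvec 0) = 2 * ρ := by
    rw [dist_eq_norm, add_sub_add_left_eq_sub, ← sub_smul, norm_smul, norm_uvec, mul_one,
      Real.norm_eq_abs, abs_of_nonneg (by linarith)]
    ring
  linarith

lemma limit_bound (A L r C : ℝ)
    (H : ∀ m : ℕ, 0 < m → ∃ t : ℝ, |t - r| ≤ C * dl m ∧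
      A ≤ t * L / Real.cos (dl m / 2) - Real.pi * t ^ 2) :
    A ≤ r * L - Real.pi * r ^ 2 := by
  choose t ht1 ht2 using fun n : ℕ => H (n + 1) (Nat.succ_pos n)
  have hd : Filter.Tendsto (fun n : ℕ => dl (n + 1)) Filter.atTop (nhds 0) := by
    have h1 := (tendsto_one_div_add_atTop_nhds_zero_nat (𝕜 := ℝ)).const_mul (Real.pi / 2)
    rw [mul_zero] at h1
    refine h1.congr fun n => ?_
    unfold dl; push_cast
    have : (n : ℝ) + 1 ≠ 0 := by positivity
    field_simp
  have ht : Filter.Tendsto t Filter.atTop (nhds r) := by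
    rw [tendsto_iff_dist_tendsto_zero]
    have h2 := hd.const_mul C
    rw [mul_zero] at h2
    exact squeeze_zero (fun n => dist_nonneg) (fun n => ht1 n) h2
  have hc : Filter.Tendsto (fun n : ℕ => Real.cos (dl (n + 1) / 2)) Filter.atTop (nhds 1) := by
    have h3 := (Real.continuous_cos.tendsto (0 / 2)).comp (hd.div_const 2)
    rw [zero_div, Real.cos_zero] at h3
    exact h3
  have hlim : Filter.Tendsto (fun n : ℕ => t n * L / Real.cos (dl (n + 1) / 2) - Real.pi * t n ^ 2)
      Filter.atTop (nhds (r * L / 1 - Real.pi * r ^ 2)) :=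
    ((ht.mul_const L).div hc one_ne_zero).sub ((ht.pow 2).const_mul _)
  rw [div_one] at hlim
  exact ge_of_tendsto' hlim ht2

lemma final_algebra (A L r R : ℝ) (hr : 0 < r) (hrR : r ≤ R)
    (h1 : A ≤ r * L - Real.pi * r ^ 2) (h2 : A ≤ R * L - Real.pi * R ^ 2) :
    L ^ 2 * ((R - r) / (R + r)) ^ 2 ≤ L ^ 2 - 4 * Real.pi * A := by
  have hpi := Real.pi_pos
  have hs : 0 < R + r := by linarith
  have key : Real.pi * A * (R + r) ^ 2 ≤ R * r * L ^ 2 := by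
    rcases le_total (Real.pi * (R + r)) L with h | h
    · have a1 : 0 ≤ (L - Real.pi * (R + r)) * (R * L - Real.pi * r * (R + r)) := by
        apply mul_nonneg (by linarith)
        nlinarith [mul_nonneg (mul_pos hpi hs).le (sub_nonneg.2 hrR), mul_le_mul_of_nonneg_left h (show 0 ≤ R by linarith)]
      have a2 := mul_le_mul_of_nonneg_left h1 (mul_pos hpi (pow_pos hs 2)).le
      have a3 := mul_nonneg hr.le a1
      nlinarith
    · have a1 : 0 ≤ (Real.pi * (R + r) - L) * (Real.pi * R * (R + r) - r * L) := by
        apply mul_nonneg (by linarith)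
        nlinarith [mul_nonneg (mul_pos hpi hs).le (sub_nonneg.2 hrR), mul_le_mul_of_nonneg_left h hr.le]
      have a2 := mul_le_mul_of_nonneg_left h2 (mul_pos hpi (pow_pos hs 2)).le
      have a3 := mul_nonneg (show 0 ≤ R by linarith) a1
      nlinarith
  rw [div_pow, ← mul_div_assoc, div_le_iff₀ (pow_pos hs 2)]
  nlinarith

/-- **A Bonnesen-type inequality.**  Let `K ⊆ ℝ²` be a compact convex set with nonempty
interior, of area `A`, boundary length `L`, circumradius `R` and inradius `r`; the
boundary length is the total variation of a continuous closed parametrization of the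
topological boundary of `K`, injective on `[0,1)`.  Then `L² − 4πA ≥ L²((R − r)/(R + r))²`. -/
theorem bonnesen_type_inequality_ratio (K : Set (EuclideanSpace ℝ (Fin 2)))
    (hcomp : IsCompact K) (hconv : Convex ℝ K) (hint : (interior K).Nonempty)
    (γ : ℝ → EuclideanSpace ℝ (Fin 2))
    (hγcont : ContinuousOn γ (Set.Icc 0 1))
    (hγclosed : γ 0 = γ 1)
    (hγinj : Set.InjOn γ (Set.Ico 0 1))
    (hγimg : γ '' Set.Icc 0 1 = frontier K)
    (L : ℝ) (hL : L = (eVariationOn γ (Set.Icc 0 1)).toReal) :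
    L ^ 2 * ((circumradius K - inradius K) / (circumradius K + inradius K)) ^ 2 ≤
      L ^ 2 - 4 * Real.pi * (volume K).toReal := by
  have hne : K.Nonempty := hint.mono interior_subset
  have hcl : IsClosed K := hcomp.isClosed
  obtain ⟨D, hD⟩ := hcomp.isBounded.exists_norm_le
  have hD0 : 0 ≤ D := (norm_nonneg _).trans (hD _ hne.some_mem)
  have hKD : K ⊆ Metric.closedBall 0 D := fun x hx => mem_closedBall_zero_iff.2 (hD x hx)
  have hbdd : BddAbove { ρ : ℝ | 0 ≤ ρ ∧ ∃ c : EuclideanSpace ℝ (Fin 2), Metric.closedBall c ρ ⊆ K } :=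
    ⟨D, fun ρ hρ => by
      obtain ⟨h0, c, hc⟩ := hρ
      exact ball_le h0 (hc.trans hKD)⟩
  have hbdd' : BddBelow { ρ : ℝ | 0 ≤ ρ ∧ ∃ c : EuclideanSpace ℝ (Fin 2), K ⊆ Metric.closedBall c ρ } :=
    ⟨0, fun ρ hρ => hρ.1⟩
  have hr : 0 < inradius K := by
    obtain ⟨o, ho⟩ := hint
    obtain ⟨ε, hε, hball⟩ := Metric.isOpen_iff.1 isOpen_interior o ho
    have h1 : ε / 2 ≤ inradius K := le_csSup hbdd ⟨by positivity, o, fun x hx =>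
      interior_subset (hball (Metric.closedBall_subset_ball (by linarith) hx))⟩
    linarith
  have hrR : inradius K ≤ circumradius K := by
    refine le_csInf ⟨D, hD0, 0, hKD⟩ fun ρ' hρ' => ?_
    obtain ⟨h0', c', hc'⟩ := hρ'
    refine Real.sSup_le (fun ρ hρ => ?_) h0'
    obtain ⟨h0, c, hc⟩ := hρ
    exact ball_le h0 (hc.trans hc')
  refine final_algebra _ _ _ _ hr hrR ?_ ?_
  · -- inradius
    refine limit_bound _ _ _ (3 * D) fun m hm => ?_
    have hd := dl_pos hm
    obtain ⟨c, t, hfeas, hz, hmax⟩ := exists_contact hm (supp m K) (supp_periodic hm K)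
    have ht0 : 0 ≤ t := hmax hne.some 0 fun k => by
      rw [add_zero]; exact le_supp m hcomp k hne.some_mem
    have hrt : inradius K ≤ t := by
      refine Real.sSup_le (fun ρ hρ => ?_) ht0
      obtain ⟨h0, b, hb⟩ := hρ
      refine hmax b ρ fun k => ?_
      have h1 : b + ρ • uvec (k * dl m) ∈ K := by
        apply hb
        rw [Metric.mem_closedBall, dist_eq_norm, add_sub_cancel_left, norm_smul, norm_uvec, mul_one,
          Real.norm_eq_abs, abs_of_nonneg h0]
      have h2 := le_supp m hcomp k h1
      unfold gp at h2 ⊢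
      rw [pr_add, pr_smul, pr_uvec, sub_self, Real.cos_zero, mul_one] at h2
      exact h2
    have htr : t - 3 * D * dl m ≤ inradius K := by
      by_cases hneg : t - 3 * D * dl m < 0
      · linarith
      refine le_csSup hbdd ⟨not_lt.1 hneg, c, fun x hx => ?_⟩
      by_contra hxK
      obtain ⟨φ, hφ⟩ := exists_sep hcl hconv hne x hxK
      obtain ⟨k, hk⟩ := exists_near hm φ
      obtain ⟨a, ha, hak⟩ := supp_attained m hcomp hne k
      have hcn : ‖c‖ ≤ 2 * D := by
        obtain ⟨j, -, hj⟩ := exists_gp_ge hm c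
        have h1 := hfeas (j : ℕ)
        obtain ⟨b, hb, hbj⟩ := supp_attained m hcomp hne (j : ℕ)
        have h2 : gp m (j : ℕ) b ≤ ‖b‖ := pr_le _ _
        linarith [hD b hb]
      have b1 := hφ a ha
      have b2 := abs_le.1 (abs_pr_sub_le φ (k * dl m) a)
      have b3 := abs_le.1 (abs_pr_sub_le φ (k * dl m) c)
      have b4 : ‖a‖ * |φ - k * dl m| ≤ D * dl m :=
        mul_le_mul (hD a ha) hk (abs_nonneg _) hD0
      have b5 : ‖c‖ * |φ - k * dl m| ≤ 2 * D * dl m :=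
        mul_le_mul hcn hk (abs_nonneg _) (by linarith)
      have b6 : pr φ (x - c) ≤ t - 3 * D * dl m := by
        refine (pr_le _ _).trans ?_
        rw [← dist_eq_norm]; exact hx
      rw [pr_sub] at b6
      have b7 := hfeas k
      unfold gp at hak b7
      linarith [b2.1, b3.2]
    refine ⟨t, ?_, ?_⟩
    · rw [abs_of_nonneg (by linarith)]; linarith
    · exact key_bound K hcomp hconv hint γ hγcont hγclosed hγinj hγimg L hL hm
        (fun k => supp m K k - gp m k c - t) c t ht0 (fun k => by ring) hz
  · -- circumradius
    refine limit_bound _ _ _ (circumradius K) fun m hm => ?_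
    have hd := dl_pos hm
    obtain ⟨c, t, hfeas, hz, hmax⟩ := exists_contact hm (fun k => - supp m K k) (fun k => by
      simp only [supp_periodic hm K k])
    have ht0 : 0 ≤ - t := by
      have h1 := hfeas 0
      have h2 := hfeas (0 + 2 * m)
      rw [gp_add_half hm] at h2
      have h3 := le_supp m hcomp 0 hne.some_mem
      have h4 := le_supp m hcomp (0 + 2 * m) hne.some_mem
      rw [gp_add_half hm] at h4
      linarith
    have htR : - t ≤ circumradius K := by
      refine le_csInf ⟨D, hD0, 0, hKD⟩ fun ρ hρ => ?_
      obtain ⟨h0, b, hb⟩ := hρ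
      have := hmax (-b) (-ρ) fun k => by
        obtain ⟨a, ha, hak⟩ := supp_attained m hcomp hne k
        have h1 : gp m k (a - b) ≤ ρ := by
          refine (pr_le _ _).trans ?_
          rw [← dist_eq_norm]; exact hb ha
        rw [← hak]
        unfold gp at h1 ⊢
        rw [pr_sub] at h1
        rw [pr_neg]
        linarith
      linarith
    have hRt : circumradius K * (1 - dl m) ≤ - t := by
      rcases le_or_gt 1 (dl m) with h1 | h1
      · have : circumradius K * (1 - dl m) ≤ 0 :=
          mul_nonpos_of_nonneg_of_nonpos (by linarith) (by linarith)
        linarith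
      have h2 : 0 < 1 - dl m := by linarith
      rw [← le_div_iff₀ h2]
      refine csInf_le hbdd' ⟨div_nonneg ht0 h2.le, -c, fun y hy => ?_⟩
      rw [Metric.mem_closedBall, dist_eq_norm, le_div_iff₀ h2]
      obtain ⟨φ, hφ⟩ := exists_pr_eq_norm (y - -c)
      obtain ⟨k, hk⟩ := exists_near hm φ
      have b2 := abs_le.1 (abs_pr_sub_le φ (k * dl m) (y - -c))
      have b3 := mul_le_mul_of_nonneg_left hk (norm_nonneg (y - -c))
      have b4 := hfeas k
      have b5 := le_supp m hcomp k hy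
      have b6 : pr (k * dl m) (y - -c) = gp m k y + gp m k c := by
        rw [pr_sub, pr_neg]; unfold gp; ring
      rw [b6, hφ] at b2
      linarith [b2.2]
    refine ⟨-t, ?_, ?_⟩
    · rw [abs_of_nonpos (by linarith)]; linarith
    · exact key_bound K hcomp hconv hint γ hγcont hγclosed hγinj hγimg L hL hm
        (fun k => supp m K k + gp m k c + t) (-c) (-t) ht0
        (fun k => by simp only [gp, pr_neg]; ring)
        (fun i => by
          obtain ⟨j, h1, h2, h3⟩ := hz i
          exact ⟨j, h1, h2, by linarith⟩)
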